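/- arXiv:2507.00361 — 7 statements merged into one kernel-verified Lean document; each statement's English description precedes it below -/
import Mathlib

section
/- Under the stated assumptions, let δ₁ := min{1/16, (4/M²)ω(1/32), (4/M²)ω((√(2(1−α)) − 1)/2), (4/M²)ω((1/2)(1/√(1−β) − 1))} and t₀ := max{Ψ(B̄₀), (3(1+D₀)²/(α(1−β)))·log(C₀/δ₁)}. Then for every t ≥ t₀ the BFGS iterates satisfy C_t ≤ δ₁. -/
/-!
In the coordinates in which `(1 + D₀) ∇²f(x_*)` is the identity, two quantities are tracked along
the iteration: the suboptimality `C_t` and the potential `Ψ_t = Ψ(B̄_t) ≥ 0`.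

Strong self-concordance gives `C(z) ≥ (4/M²) ω(M‖z - x_*‖_* / 2)` (`SSCProblem.omegaFn_le`). Since the
Armijo condition makes `C_t` nonincreasing, all iterates, and the segments between them, stay where
`M‖z - x_*‖_* ≤ D₀`; there `∇²f` and `∇²f(x_*)` agree up to the factor `1 + D₀` in both directions.
The upper bound makes the normalised pair `(s̄, ȳ)` satisfy `‖ȳ‖² ≤ s̄ᵀȳ` (`SSCProblem.cocoercive`),
and the lower bound gives gradient domination `C ≤ (1 + D₀) ‖∇f‖²_*` in the dual norm
(`SSCProblem.subopt_le`).

The trace and determinant formulas for the update then give `Ψ_{t+1} ≤ Ψ_t + log k_t`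
(`Psi_bfgs_le`), where `k_t = cos²θ_t / m_t`, while the Armijo–Wolfe conditions with gradient
domination give `C_{t+1} ≤ (1 - κ k_t) C_t` for `κ = α(1 - β)/(1 + D₀)²`. As
`e k_t ≥ 2 + log k_t ≥ 2 + Ψ_{t+1} - Ψ_t` (`SSCProblem.step`), telescoping yields
`C_t ≤ C₀ exp(-κ (2t + Ψ_t - Ψ₀)/e)`. For `t ≥ Ψ₀` the exponent is at most `-κ t/e ≤ -κ t/3`, and this
is at most `-log(C₀/δ₁)` for `t ≥ (3/κ) log(C₀/δ₁)`.
-/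

open Matrix Real Finset

noncomputable section

/-- `ω(x) = x − log(1+x)`. -/
def omegaFn (x : ℝ) : ℝ := x - Real.log (1 + x)

/-- `Ψ(A) = Tr(A) − d − log det A`. -/
def Psi (d : ℕ) (A : Matrix (Fin d) (Fin d) ℝ) : ℝ :=
  A.trace - (d : ℝ) - Real.log A.det

/-- Loewner order: `A ⪯ B` iff `B − A` is positive semidefinite. -/
def loewnerLE {d : ℕ} (A B : Matrix (Fin d) (Fin d) ℝ) : Prop := (B - A).PosSemidef

/-- The BFGS Hessian-approximation update
`B⁺ = B − (B s sᵀ B)/(sᵀ B s) + (y yᵀ)/(sᵀ y)`. -/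
def bfgsUpdate {d : ℕ} (B : Matrix (Fin d) (Fin d) ℝ) (s y : Fin d → ℝ) :
    Matrix (Fin d) (Fin d) ℝ :=
  B - (s ⬝ᵥ (B *ᵥ s))⁻¹ • vecMulVec (B *ᵥ s) (Bᵀ *ᵥ s) + (s ⬝ᵥ y)⁻¹ • vecMulVec y y

/-- `M`-strong self-concordance of a Hessian field:
`∇²f(x) − ∇²f(y) ⪯ M‖x−y‖_z ∇²f(y)` for all `x, y, z`. -/
def StronglySelfConcordant {d : ℕ} (hess : (Fin d → ℝ) → Matrix (Fin d) (Fin d) ℝ)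
    (M : ℝ) : Prop :=
  ∀ x y z : Fin d → ℝ,
    loewnerLE (hess x - hess y)
      ((M * Real.sqrt ((x - y) ⬝ᵥ (hess z *ᵥ (x - y)))) • hess y)



/-! ### Quadratic forms and the algebra of the BFGS update -/

lemma dot_mulVec_comm {d : ℕ} {A : Matrix (Fin d) (Fin d) ℝ} (hA : Aᵀ = A)
    (u v : Fin d → ℝ) : u ⬝ᵥ (A *ᵥ v) = v ⬝ᵥ (A *ᵥ u) := by
  rw [dotProduct_mulVec, ← mulVec_transpose, hA, dotProduct_comm]

lemma posDef_transpose {d : ℕ} {A : Matrix (Fin d) (Fin d) ℝ} (hA : A.PosDef) : Aᵀ = A := by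
  simpa using hA.isHermitian.eq

lemma posDef_dot_pos {d : ℕ} {A : Matrix (Fin d) (Fin d) ℝ} (hA : A.PosDef)
    {v : Fin d → ℝ} (hv : v ≠ 0) : 0 < v ⬝ᵥ (A *ᵥ v) := by
  simpa using hA.dotProduct_mulVec_pos hv

lemma posDef_dot_nonneg {d : ℕ} {A : Matrix (Fin d) (Fin d) ℝ} (hA : A.PosDef)
    (v : Fin d → ℝ) : 0 ≤ v ⬝ᵥ (A *ᵥ v) := by
  simpa using hA.posSemidef.dotProduct_mulVec_nonneg v

lemma dot_self_nonneg {d : ℕ} (v : Fin d → ℝ) : 0 ≤ v ⬝ᵥ v :=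
  Finset.sum_nonneg fun i _ => mul_self_nonneg (v i)

lemma dot_self_pos {d : ℕ} {v : Fin d → ℝ} (hv : v ≠ 0) : 0 < v ⬝ᵥ v :=
  lt_of_le_of_ne (dot_self_nonneg v) fun h => hv (dotProduct_self_eq_zero.1 h.symm)

lemma bfgs_posDef {d : ℕ} {B : Matrix (Fin d) (Fin d) ℝ} (hB : B.PosDef)
    {s y : Fin d → ℝ} (hsy : 0 < s ⬝ᵥ y) : (bfgsUpdate B s y).PosDef := by
  have hBt := posDef_transpose hB
  have hs : s ≠ 0 := by
    rintro rfl
    simp at hsy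
  have hA := posDef_dot_pos hB hs
  refine PosDef.of_dotProduct_mulVec_pos ?_ ?_
  · simp only [IsHermitian, conjTranspose_eq_transpose_of_trivial, bfgsUpdate, hBt,
      transpose_add, transpose_sub, transpose_smul, transpose_vecMulVec]
  · intro v hv
    -- the component of `v` that is `B`-orthogonal to `s` carries the first two terms
    set c := (v ⬝ᵥ (B *ᵥ s)) / (s ⬝ᵥ (B *ᵥ s)) with hc
    have key : star v ⬝ᵥ (bfgsUpdate B s y *ᵥ v)
        = (v - c • s) ⬝ᵥ (B *ᵥ (v - c • s)) + (s ⬝ᵥ y)⁻¹ * (v ⬝ᵥ y) ^ 2 := by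
      simp only [bfgsUpdate, hBt, star_trivial, add_mulVec, sub_mulVec, smul_mulVec,
        vecMulVec_mulVec, mulVec_sub, mulVec_smul, dotProduct_add, dotProduct_sub,
        sub_dotProduct, smul_dotProduct, dotProduct_smul, smul_eq_mul,
        op_smul_eq_smul]
      rw [dot_mulVec_comm hBt s v, dotProduct_comm y v, dotProduct_comm (B *ᵥ s) v, hc]
      field_simp
      ring
    rw [key]
    by_cases hz : v - c • s = 0
    · have hv' : v = c • s := sub_eq_zero.1 hz
      have hc0 : c ≠ 0 := by
        rintro h
        rw [h, zero_smul] at hv'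
        exact hv hv'
      have : v ⬝ᵥ y = c * (s ⬝ᵥ y) := by
        rw [hv', smul_dotProduct, smul_eq_mul]
      rw [hz, this]
      simp only [mulVec_zero, dotProduct_zero, zero_add]
      positivity
    · have := posDef_dot_pos hB hz
      positivity

lemma bfgs_trace {d : ℕ} {B : Matrix (Fin d) (Fin d) ℝ} (hB : B.PosDef) (s y : Fin d → ℝ) :
    (bfgsUpdate B s y).trace = B.trace - (s ⬝ᵥ (B *ᵥ s))⁻¹ * ((B *ᵥ s) ⬝ᵥ (B *ᵥ s))
      + (s ⬝ᵥ y)⁻¹ * (y ⬝ᵥ y) := by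
  simp only [bfgsUpdate, posDef_transpose hB, trace_add, trace_sub, trace_smul, trace_vecMulVec,
    smul_eq_mul]

/-- The update is a rank-two perturbation `B (1 + U V)`, so its determinant reduces to the
`2 × 2` determinant of `1 + V U`. -/
lemma bfgs_det {d : ℕ} {B : Matrix (Fin d) (Fin d) ℝ} (hB : B.PosDef)
    {s y : Fin d → ℝ} (hsy : 0 < s ⬝ᵥ y) :
    (bfgsUpdate B s y).det = B.det * ((s ⬝ᵥ y) / (s ⬝ᵥ (B *ᵥ s))) := by
  have hBt := posDef_transpose hB
  have hs : s ≠ 0 := by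
    rintro rfl
    simp at hsy
  have hA := posDef_dot_pos hB hs
  have hdet : IsUnit B.det := (isUnit_iff_isUnit_det B).1 hB.isUnit
  let U : Matrix (Fin d) (Fin 2) ℝ := of fun i j => ![s i, (B⁻¹ *ᵥ y) i] j
  let V : Matrix (Fin 2) (Fin d) ℝ :=
    of ![-((s ⬝ᵥ (B *ᵥ s))⁻¹ • (B *ᵥ s)), (s ⬝ᵥ y)⁻¹ • y]
  have hUV : U * V = vecMulVec s (-((s ⬝ᵥ (B *ᵥ s))⁻¹ • (B *ᵥ s)))
      + vecMulVec (B⁻¹ *ᵥ y) ((s ⬝ᵥ y)⁻¹ • y) := by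
    ext i j
    simp [U, V, Matrix.mul_apply, Fin.sum_univ_two, vecMulVec_apply]
    ring
  have hfac : bfgsUpdate B s y = B * (1 + U * V) := by
    rw [hUV, mul_add, mul_one, mul_add, mul_vecMulVec, mul_vecMulVec, mulVec_mulVec,
      mul_nonsing_inv _ hdet, one_mulVec, vecMulVec_neg, vecMulVec_smul, vecMulVec_smul,
      bfgsUpdate, hBt]
    abel
  have hVU : V * U = !![-1, -((s ⬝ᵥ (B *ᵥ s))⁻¹ * (s ⬝ᵥ y));
      1, (s ⬝ᵥ y)⁻¹ * (y ⬝ᵥ (B⁻¹ *ᵥ y))] := by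
    have h0 : (B *ᵥ s) ⬝ᵥ (B⁻¹ *ᵥ y) = s ⬝ᵥ y := by
      rw [dotProduct_comm, dot_mulVec_comm hBt, mulVec_mulVec, mul_nonsing_inv _ hdet, one_mulVec]
    ext k j
    fin_cases k <;> fin_cases j
    · change (-((s ⬝ᵥ (B *ᵥ s))⁻¹ • (B *ᵥ s))) ⬝ᵥ s = -1
      rw [neg_dotProduct, smul_dotProduct, dotProduct_comm (B *ᵥ s) s, smul_eq_mul,
        inv_mul_cancel₀ hA.ne']
    · change (-((s ⬝ᵥ (B *ᵥ s))⁻¹ • (B *ᵥ s))) ⬝ᵥ (B⁻¹ *ᵥ y) = -((s ⬝ᵥ (B *ᵥ s))⁻¹ * (s ⬝ᵥ y))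
      rw [neg_dotProduct, smul_dotProduct, h0, smul_eq_mul]
    · change ((s ⬝ᵥ y)⁻¹ • y) ⬝ᵥ s = 1
      rw [smul_dotProduct, dotProduct_comm y s, smul_eq_mul, inv_mul_cancel₀ hsy.ne']
    · change ((s ⬝ᵥ y)⁻¹ • y) ⬝ᵥ (B⁻¹ *ᵥ y) = (s ⬝ᵥ y)⁻¹ * (y ⬝ᵥ (B⁻¹ *ᵥ y))
      rw [smul_dotProduct, smul_eq_mul]
  rw [hfac, det_mul, det_one_add_mul_comm, hVU, det_fin_two]
  simp
  left
  ring

/-! ### The potential `Ψ` -/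

/-- In terms of the eigenvalues `λ` of `A`, `Ψ(A) = ∑ (λ - 1 - log λ)`. -/
lemma Psi_nonneg {d : ℕ} {A : Matrix (Fin d) (Fin d) ℝ} (hA : A.PosDef) : 0 ≤ Psi d A := by
  have hpos := hA.eigenvalues_pos
  have h : Psi d A = ∑ i, (hA.isHermitian.eigenvalues i - 1
      - Real.log (hA.isHermitian.eigenvalues i)) := by
    rw [Psi, hA.isHermitian.trace_eq_sum_eigenvalues, hA.isHermitian.det_eq_prod_eigenvalues]
    simp only [RCLike.ofReal_real_eq_id, id_eq]
    rw [Real.log_prod fun i _ => (hpos i).ne']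
    simp [Finset.sum_sub_distrib]
  rw [h]
  exact Finset.sum_nonneg fun i _ => by linarith [Real.log_le_sub_one_of_pos (hpos i)]

/-- One update changes `Ψ` by at most `log (cos²θ / m)`, where `θ` is the angle between `s` and
`B s` and `m = sᵀy / ‖s‖²`; the normalisation of `y` says that curvature is at most one. -/
lemma Psi_bfgs_le {d : ℕ} {B : Matrix (Fin d) (Fin d) ℝ} (hB : B.PosDef)
    {s y : Fin d → ℝ} (hsy : 0 < s ⬝ᵥ y) (hy : y ⬝ᵥ y ≤ s ⬝ᵥ y) :
    Psi d (bfgsUpdate B s y) ≤ Psi d B + Real.log ((s ⬝ᵥ (B *ᵥ s)) ^ 2 /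
      (((B *ᵥ s) ⬝ᵥ (B *ᵥ s)) * (s ⬝ᵥ y))) := by
  have hs : s ≠ 0 := by
    rintro rfl
    simp at hsy
  have hA := posDef_dot_pos hB hs
  have hBs : B *ᵥ s ≠ 0 := by
    intro h
    rw [h] at hA
    simp at hA
  have hN := dot_self_pos hBs
  rw [Psi, Psi, bfgs_trace hB, bfgs_det hB hsy]
  generalize s ⬝ᵥ (B *ᵥ s) = a at *
  generalize (B *ᵥ s) ⬝ᵥ (B *ᵥ s) = n at *
  generalize s ⬝ᵥ y = q at *
  generalize y ⬝ᵥ y = r at *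
  have h1 : q⁻¹ * r ≤ 1 := by
    rw [inv_mul_le_iff₀ hsy]
    linarith
  have h2 := Real.log_le_sub_one_of_pos (show 0 < a⁻¹ * n by positivity)
  rw [Real.log_mul hB.det_pos.ne' (by positivity), Real.log_div hsy.ne' hA.ne',
    Real.log_div (by positivity) (by positivity), Real.log_pow, Real.log_mul hN.ne' hsy.ne']
  rw [Real.log_mul (by positivity) hN.ne', Real.log_inv] at h2
  push_cast
  linarith

/-! ### Self-concordant functions along segments -/

/-- The assumptions on the objective: `f` is twice continuously differentiable with gradient `grad`
and positive definite Hessian `hess`, it is `M`-strongly self-concordant, and `xstar` is a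
minimiser. -/
structure SSCProblem {d : ℕ} (f : (Fin d → ℝ) → ℝ) (grad : (Fin d → ℝ) → (Fin d → ℝ))
    (hess : (Fin d → ℝ) → Matrix (Fin d) (Fin d) ℝ) (M : ℝ) (xstar : Fin d → ℝ) : Prop where
  contDiff : ContDiff ℝ 2 f
  grad_eq : ∀ x v, fderiv ℝ f x v = grad x ⬝ᵥ v
  hess_eq : ∀ x v, fderiv ℝ grad x v = hess x *ᵥ v
  hess_pd : ∀ x, (hess x).PosDef
  M_pos : 0 < M
  ssc : StronglySelfConcordant hess M
  isMin : ∀ y, f xstar ≤ f y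

/-- `M ‖v‖_A`, the length of `v` in the local metric given by `A`, scaled by the self-concordance
constant. -/
def scaledLength {d : ℕ} (M : ℝ) (A : Matrix (Fin d) (Fin d) ℝ) (v : Fin d → ℝ) : ℝ :=
  M * Real.sqrt (v ⬝ᵥ (A *ᵥ v))

lemma le_of_hasDerivAt_nonneg {φ φ' : ℝ → ℝ} {b : ℝ} (hb : 0 ≤ b)
    (h : ∀ τ ∈ Set.Icc 0 b, HasDerivAt φ (φ' τ) τ) (h0 : ∀ τ ∈ Set.Icc 0 b, 0 ≤ φ' τ) :
    φ 0 ≤ φ b := by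
  have hm : MonotoneOn φ (Set.Icc 0 b) := by
    refine monotoneOn_of_hasDerivWithinAt_nonneg (f' := φ') (convex_Icc 0 b)
      (fun τ hτ => (h τ hτ).continuousAt.continuousWithinAt)
      (fun τ hτ => (h τ (interior_subset hτ)).hasDerivWithinAt)
      (fun τ hτ => h0 τ (interior_subset hτ))
  exact hm ⟨le_rfl, hb⟩ ⟨hb, le_rfl⟩ hb

lemma omegaFn_zero : omegaFn 0 = 0 := by simp [omegaFn]

lemma omegaFn_lt {a b : ℝ} (ha : 0 ≤ a) (hab : a < b) : omegaFn a < omegaFn b := by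
  have h1 : 0 < (1 + b) / (1 + a) := by
    have : 0 < 1 + b := by linarith
    positivity
  have hne : (1 + b) / (1 + a) ≠ 1 := by
    intro h
    rw [div_eq_one_iff_eq (by positivity)] at h
    linarith
  have h2 := Real.log_lt_sub_one_of_pos h1 hne
  rw [Real.log_div (by linarith) (by positivity)] at h2
  have h3 : (1 + b) / (1 + a) - 1 ≤ b - a := by
    rw [sub_le_iff_le_add, div_le_iff₀ (by positivity)]
    nlinarith
  simp only [omegaFn]
  linarith

lemma omegaFn_pos {a : ℝ} (ha : 0 < a) : 0 < omegaFn a := by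
  simpa [omegaFn_zero] using omegaFn_lt le_rfl ha

lemma hasDerivAt_omegaFn {u : ℝ} (hu : 0 ≤ u) : HasDerivAt omegaFn (1 - 1 / (1 + u)) u := by
  have h : HasDerivAt (fun u : ℝ => 1 + u) 1 u := (hasDerivAt_id u).const_add 1
  exact (hasDerivAt_id u).sub (h.log (by positivity))

namespace SSCProblem

variable {d : ℕ} {f : (Fin d → ℝ) → ℝ} {grad : (Fin d → ℝ) → (Fin d → ℝ)}
  {hess : (Fin d → ℝ) → Matrix (Fin d) (Fin d) ℝ} {M : ℝ} {xstar : Fin d → ℝ}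

lemma hasDerivAt_f (P : SSCProblem f grad hess M xstar) (a v : Fin d → ℝ) (τ : ℝ) :
    HasDerivAt (fun τ : ℝ => f (a + τ • v)) (v ⬝ᵥ grad (a + τ • v)) τ := by
  have h1 : HasFDerivAt f (fderiv ℝ f (a + τ • v)) (a + τ • v) :=
    (P.contDiff.differentiable (by norm_num) _).hasFDerivAt
  have h2 : HasDerivAt (fun τ : ℝ => a + τ • v) v τ := by
    simpa using ((hasDerivAt_id τ).smul_const v).const_add a
  have h3 := h1.comp_hasDerivAt τ h2
  rwa [P.grad_eq, dotProduct_comm] at h3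

lemma differentiable_grad (P : SSCProblem f grad hess M xstar) : Differentiable ℝ grad := by
  have h1 : Differentiable ℝ (fderiv ℝ f) :=
    (P.contDiff.fderiv_right (m := 1) (by norm_num)).differentiable (by norm_num)
  rw [differentiable_pi]
  intro i
  have h2 : (fun x => grad x i) = fun x => fderiv ℝ f x (Pi.single i 1) := by
    funext x
    rw [P.grad_eq]
    simp
  rw [h2]
  exact h1.clm_apply (differentiable_const _)

lemma hasDerivAt_grad (P : SSCProblem f grad hess M xstar) (a v w : Fin d → ℝ) (τ : ℝ) :
    HasDerivAt (fun τ : ℝ => w ⬝ᵥ grad (a + τ • v)) (w ⬝ᵥ (hess (a + τ • v) *ᵥ v)) τ := by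
  have h1 : HasFDerivAt grad (fderiv ℝ grad (a + τ • v)) (a + τ • v) :=
    (P.differentiable_grad _).hasFDerivAt
  have h2 : HasDerivAt (fun τ : ℝ => a + τ • v) v τ := by
    simpa using ((hasDerivAt_id τ).smul_const v).const_add a
  have h3 := h1.comp_hasDerivAt τ h2
  rw [P.hess_eq, hasDerivAt_pi] at h3
  exact HasDerivAt.fun_sum fun i _ => (h3 i).const_mul (w i)

lemma grad_xstar (P : SSCProblem f grad hess M xstar) : grad xstar = 0 := by
  have h : IsLocalMin f xstar := Filter.Eventually.of_forall P.isMin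
  have h1 := P.grad_eq xstar (grad xstar)
  rw [h.fderiv_eq_zero] at h1
  exact dotProduct_self_eq_zero.1 h1.symm

lemma hess_symm (P : SSCProblem f grad hess M xstar) (y : Fin d → ℝ) : (hess y)ᵀ = hess y :=
  posDef_transpose (P.hess_pd y)

lemma quad_ssc (P : SSCProblem f grad hess M xstar) (x y z w : Fin d → ℝ) :
    w ⬝ᵥ (hess x *ᵥ w) ≤ (1 + scaledLength M (hess z) (x - y)) * (w ⬝ᵥ (hess y *ᵥ w)) := by
  have h := (P.ssc x y z).dotProduct_mulVec_nonneg w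
  simp only [star_trivial, sub_mulVec, smul_mulVec, dotProduct_sub, dotProduct_smul,
    smul_eq_mul] at h
  rw [scaledLength]
  linarith

lemma quad_upper (P : SSCProblem f grad hess M xstar) {D : ℝ} {y : Fin d → ℝ}
    (hy : scaledLength M (hess xstar) (y - xstar) ≤ D) (w : Fin d → ℝ) :
    w ⬝ᵥ (hess y *ᵥ w) ≤ (1 + D) * (w ⬝ᵥ (hess xstar *ᵥ w)) := by
  refine (P.quad_ssc y xstar xstar w).trans ?_
  have := posDef_dot_nonneg (P.hess_pd xstar) w
  gcongr

lemma scaledLength_smul {A : Matrix (Fin d) (Fin d) ℝ} {c : ℝ} (hc : 0 ≤ c) (v : Fin d → ℝ) :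
    scaledLength M A (c • v) = c * scaledLength M A v := by
  simp only [scaledLength, mulVec_smul, dotProduct_smul, smul_dotProduct, smul_eq_mul]
  rw [← mul_assoc, Real.sqrt_mul (mul_self_nonneg c), Real.sqrt_mul_self hc]
  ring

lemma scaledLength_neg {A : Matrix (Fin d) (Fin d) ℝ} (v : Fin d → ℝ) :
    scaledLength M A (-v) = scaledLength M A v := by
  simp [scaledLength, mulVec_neg]

lemma quad_lower (P : SSCProblem f grad hess M xstar) {D : ℝ} {y : Fin d → ℝ}
    (hy : scaledLength M (hess xstar) (y - xstar) ≤ D) (w : Fin d → ℝ) :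
    w ⬝ᵥ (hess xstar *ᵥ w) ≤ (1 + D) * (w ⬝ᵥ (hess y *ᵥ w)) := by
  refine (P.quad_ssc xstar y xstar w).trans ?_
  rw [← neg_sub y xstar, scaledLength_neg]
  have := posDef_dot_nonneg (P.hess_pd y) w
  gcongr

lemma scaledLength_nonneg (P : SSCProblem f grad hess M xstar) (A : Matrix (Fin d) (Fin d) ℝ)
    (v : Fin d → ℝ) : 0 ≤ scaledLength M A v :=
  mul_nonneg P.M_pos.le (Real.sqrt_nonneg _)

/-- Self-concordance bounds the growth of `f` away from its minimiser from below. Along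
`τ ↦ xstar + τ v` with `r = M ‖v‖`, the second derivative of `f` is at least
`(r² / M²) / (1 + τ r)`, hence at least `(r² / M²) / (1 + τ r / 2)²`, which is the second derivative
of `(4 / M²) ω(τ r / 2)`. -/
lemma omegaFn_le (P : SSCProblem f grad hess M xstar) (v : Fin d → ℝ) :
    (4 / M ^ 2) * omegaFn (scaledLength M (hess xstar) v / 2) ≤ f (xstar + v) - f xstar := by
  have hM := P.M_pos
  set r := scaledLength M (hess xstar) v with hr
  have hr0 : 0 ≤ r := P.scaledLength_nonneg _ _
  have hq0 := posDef_dot_nonneg (P.hess_pd xstar) v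
  have hq : v ⬝ᵥ (hess xstar *ᵥ v) = r ^ 2 / M ^ 2 := by
    rw [hr, scaledLength, mul_pow, Real.sq_sqrt hq0]
    field_simp
  have hlin : ∀ τ : ℝ, HasDerivAt (fun τ : ℝ => τ * (r / 2)) (r / 2) τ := fun τ => by
    simpa using (hasDerivAt_id τ).mul_const (r / 2)
  have hslope : ∀ τ : ℝ, 0 ≤ τ →
      (2 * r / M ^ 2) * (1 - 1 / (1 + τ * (r / 2))) ≤ v ⬝ᵥ grad (xstar + τ • v) := by
    intro b hb
    have key := le_of_hasDerivAt_nonneg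
      (φ := fun τ => v ⬝ᵥ grad (xstar + τ • v) - (2 * r / M ^ 2) * (1 - (1 + τ * (r / 2))⁻¹))
      (φ' := fun τ => v ⬝ᵥ (hess (xstar + τ • v) *ᵥ v)
        - (2 * r / M ^ 2) * -(-(r / 2) / (1 + τ * (r / 2)) ^ 2)) hb ?_ ?_
    · simp only [zero_smul, add_zero, P.grad_xstar, dotProduct_zero, zero_mul, inv_one, sub_self,
        mul_zero] at key
      rw [one_div]
      linarith
    · intro τ hτ
      have hpos : 0 < 1 + τ * (r / 2) := by have := hτ.1; positivity
      exact (P.hasDerivAt_grad xstar v v τ).sub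
        (((((hlin τ).const_add 1).inv hpos.ne').const_sub 1).const_mul (2 * r / M ^ 2))
    · intro τ hτ
      have hτ0 := hτ.1
      have h := P.quad_lower (y := xstar + τ • v) (D := τ * r)
        (by rw [add_sub_cancel_left, scaledLength_smul hτ0]) v
      rw [hq] at h
      have h2 : 0 < 1 + τ * r := by positivity
      have hpos : 0 < 1 + τ * (r / 2) := by positivity
      have h3 : r ^ 2 / M ^ 2 / (1 + τ * (r / 2)) ^ 2 ≤ r ^ 2 / M ^ 2 / (1 + τ * r) := by
        apply div_le_div_of_nonneg_left (by positivity) h2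
        nlinarith [sq_nonneg (τ * r)]
      have h4 : r ^ 2 / M ^ 2 / (1 + τ * r) ≤ v ⬝ᵥ (hess (xstar + τ • v) *ᵥ v) := by
        rw [div_le_iff₀ h2]
        linarith
      have h5 : (2 * r / M ^ 2) * -(-(r / 2) / (1 + τ * (r / 2)) ^ 2)
          = r ^ 2 / M ^ 2 / (1 + τ * (r / 2)) ^ 2 := by
        field_simp
      rw [h5]
      linarith
  have key := le_of_hasDerivAt_nonneg (b := 1)
    (φ := fun τ => f (xstar + τ • v) - (4 / M ^ 2) * omegaFn (τ * (r / 2)))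
    (φ' := fun τ => v ⬝ᵥ grad (xstar + τ • v)
      - (4 / M ^ 2) * ((1 - 1 / (1 + τ * (r / 2))) * (r / 2))) zero_le_one ?_ ?_
  · simp only [zero_smul, add_zero, zero_mul, omegaFn_zero, mul_zero, sub_zero, one_smul,
      one_mul] at key
    linarith
  · intro τ hτ
    have hpos : 0 ≤ τ * (r / 2) := by have := hτ.1; positivity
    exact (P.hasDerivAt_f xstar v τ).sub
      (((hasDerivAt_omegaFn hpos).comp τ (hlin τ)).const_mul (4 / M ^ 2))
  · intro τ hτ
    have h := hslope τ hτ.1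
    have h5 : (4 / M ^ 2) * ((1 - 1 / (1 + τ * (r / 2))) * (r / 2))
        = (2 * r / M ^ 2) * (1 - 1 / (1 + τ * (r / 2))) := by ring
    rw [h5]
    linarith

lemma scaledLength_le (P : SSCProblem f grad hess M xstar) {D C : ℝ} (hD : 0 ≤ D)
    (hDC : omegaFn (D / 2) = M ^ 2 * C / 4) {z : Fin d → ℝ} (hz : f z - f xstar ≤ C) :
    scaledLength M (hess xstar) (z - xstar) ≤ D := by
  by_contra! h
  have hM := P.M_pos
  have h1 := omegaFn_lt (a := D / 2) (by positivity)
    (b := scaledLength M (hess xstar) (z - xstar) / 2) (by linarith)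
  have h2 := P.omegaFn_le (z - xstar)
  rw [add_sub_cancel] at h2
  have h3 : (4 / M ^ 2) * omegaFn (D / 2) = C := by
    rw [hDC]
    field_simp
  have h4 : (4 / M ^ 2) * omegaFn (D / 2)
      < (4 / M ^ 2) * omegaFn (scaledLength M (hess xstar) (z - xstar) / 2) :=
    mul_lt_mul_of_pos_left h1 (by positivity)
  linarith

/-- Balls of the local metric are convex. -/
lemma scaledLength_segment (P : SSCProblem f grad hess M xstar) {D : ℝ} {a s : Fin d → ℝ}
    (ha : scaledLength M (hess xstar) (a - xstar) ≤ D)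
    (hb : scaledLength M (hess xstar) (a + s - xstar) ≤ D) {τ : ℝ} (hτ : τ ∈ Set.Icc (0 : ℝ) 1) :
    scaledLength M (hess xstar) (a + τ • s - xstar) ≤ D := by
  have hM := P.M_pos
  have hD : 0 ≤ D := (P.scaledLength_nonneg _ _).trans ha
  have hle : ∀ v, scaledLength M (hess xstar) v ≤ D ↔
      v ⬝ᵥ (hess xstar *ᵥ v) ≤ (D / M) ^ 2 := by
    intro v
    rw [scaledLength, ← le_div_iff₀' hM, Real.sqrt_le_left (by positivity)]
  rw [hle] at *
  have e1 : a + s - xstar = (a - xstar) + s := by abel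
  have e2 : a + τ • s - xstar = (a - xstar) + τ • s := by abel
  rw [e1] at hb
  rw [e2]
  generalize a - xstar = u at *
  have hs := posDef_dot_nonneg (P.hess_pd xstar) s
  simp only [mulVec_add, dotProduct_add, add_dotProduct, mulVec_smul, dotProduct_smul,
    smul_dotProduct, smul_eq_mul, dot_mulVec_comm (P.hess_symm xstar) s u] at *
  obtain ⟨h0, h1⟩ := hτ
  nlinarith [mul_le_mul_of_nonneg_left hb h0, mul_le_mul_of_nonneg_left ha (sub_nonneg.2 h1),
    mul_nonneg (mul_nonneg h0 (sub_nonneg.2 h1)) hs]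

/-- Where the Hessian is at most `1 + D` times the Hessian at `xstar`, gradient differences are
cocoercive in that metric. Taking `w` to be the multiple `(1 + D)⁻¹ ∇²f(xstar)⁻¹ y` of the gradient
difference `y` gives the usual form. -/
lemma cocoercive (P : SSCProblem f grad hess M xstar) {D : ℝ} {a s : Fin d → ℝ}
    (ha : scaledLength M (hess xstar) (a - xstar) ≤ D)
    (hb : scaledLength M (hess xstar) (a + s - xstar) ≤ D) (w : Fin d → ℝ) :
    2 * (w ⬝ᵥ (grad (a + s) - grad a)) - s ⬝ᵥ (grad (a + s) - grad a)
      ≤ (1 + D) * (w ⬝ᵥ (hess xstar *ᵥ w)) := by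
  set q := (1 + D) * (w ⬝ᵥ (hess xstar *ᵥ w)) with hq
  have key := le_of_hasDerivAt_nonneg (b := 1)
    (φ := fun τ => τ * q - ((2 : ℝ) • w - s) ⬝ᵥ grad (a + τ • s))
    (φ' := fun τ => 1 * q - ((2 : ℝ) • w - s) ⬝ᵥ (hess (a + τ • s) *ᵥ s)) zero_le_one ?_ ?_
  · simp only [zero_smul, add_zero, zero_mul, one_smul, one_mul, sub_dotProduct,
      smul_dotProduct, smul_eq_mul] at key
    simp only [dotProduct_sub]
    linarith
  · intro τ _
    exact ((hasDerivAt_id τ).mul_const q).sub (P.hasDerivAt_grad a s _ τ)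
  · intro τ hτ
    have h1 := P.quad_upper (P.scaledLength_segment ha hb hτ) w
    have h2 := posDef_dot_nonneg (P.hess_pd (a + τ • s)) (w - s)
    simp only [mulVec_sub, dotProduct_sub, sub_dotProduct, smul_dotProduct, smul_eq_mul,
      dot_mulVec_comm (P.hess_symm (a + τ • s)) s w] at *
    linarith

/-- Gradient domination: in the metric of `xstar`, the squared dual norm of the gradient controls
the suboptimality. -/
lemma subopt_le (P : SSCProblem f grad hess M xstar) {S : Matrix (Fin d) (Fin d) ℝ}
    (hSpd : S.PosDef) (hSsq : S * S = hess xstar) {D : ℝ} {z : Fin d → ℝ}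
    (hz : scaledLength M (hess xstar) (z - xstar) ≤ D) :
    f z - f xstar ≤ (1 + D) * ((S⁻¹ *ᵥ grad z) ⬝ᵥ (S⁻¹ *ᵥ grad z)) := by
  have hD : 0 ≤ D := (P.scaledLength_nonneg _ _).trans hz
  have hdet : IsUnit S.det := (isUnit_iff_isUnit_det S).1 hSpd.isUnit
  set v := z - xstar with hv
  have hz' : z = xstar + v := by rw [hv]; abel
  have hstar : scaledLength M (hess xstar) (xstar - xstar) ≤ D := by
    simpa [scaledLength] using hD
  have hmono : ∀ τ ∈ Set.Icc (0 : ℝ) 1, v ⬝ᵥ grad (xstar + τ • v) ≤ v ⬝ᵥ grad z := by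
    intro τ hτ
    have := le_of_hasDerivAt_nonneg (b := 1 - τ)
      (φ := fun σ => v ⬝ᵥ grad ((xstar + τ • v) + σ • v))
      (φ' := fun σ => v ⬝ᵥ (hess ((xstar + τ • v) + σ • v) *ᵥ v)) (by linarith [hτ.2])
      (fun σ _ => P.hasDerivAt_grad _ v v σ) (fun σ _ => posDef_dot_nonneg (P.hess_pd _) v)
    have e : xstar + τ • v + (1 - τ) • v = z := by
      rw [hz', add_assoc, ← add_smul]
      simp
    simpa only [zero_smul, add_zero, e] using this
  have h1 : f z - f xstar ≤ v ⬝ᵥ grad z := by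
    have := le_of_hasDerivAt_nonneg (b := 1)
      (φ := fun τ => τ * (v ⬝ᵥ grad z) - f (xstar + τ • v))
      (φ' := fun τ => 1 * (v ⬝ᵥ grad z) - v ⬝ᵥ grad (xstar + τ • v)) zero_le_one
      (fun τ _ => ((hasDerivAt_id τ).mul_const _).sub (P.hasDerivAt_f xstar v τ))
      (fun τ hτ => by linarith [hmono τ hτ])
    simp only [zero_mul, zero_smul, add_zero, one_mul, one_smul, ← hz'] at this
    linarith
  have h2 : v ⬝ᵥ (hess xstar *ᵥ v) ≤ (1 + D) * (v ⬝ᵥ grad z) := by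
    have := le_of_hasDerivAt_nonneg (b := 1)
      (φ := fun τ => (1 + D) * (v ⬝ᵥ grad (xstar + τ • v)) - τ * (v ⬝ᵥ (hess xstar *ᵥ v)))
      (φ' := fun τ => (1 + D) * (v ⬝ᵥ (hess (xstar + τ • v) *ᵥ v))
        - 1 * (v ⬝ᵥ (hess xstar *ᵥ v))) zero_le_one
      (fun τ _ => ((P.hasDerivAt_grad xstar v v τ).const_mul _).sub
        ((hasDerivAt_id τ).mul_const _))
      (fun τ hτ => by
        have := P.quad_lower (P.scaledLength_segment hstar (s := v) (by rwa [← hz', ← hv]) hτ) v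
        linarith)
    simp only [zero_mul, zero_smul, add_zero, one_mul, one_smul, ← hz', P.grad_xstar,
      dotProduct_zero, mul_zero, sub_zero] at this
    linarith
  -- expanding `‖(1 + D) S⁻¹ ∇f(z) - S v‖² ≥ 0` replaces the Cauchy–Schwarz inequality
  have h3 := dot_self_nonneg ((1 + D) • (S⁻¹ *ᵥ grad z) - S *ᵥ v)
  have h4 : (S⁻¹ *ᵥ grad z) ⬝ᵥ (S *ᵥ v) = v ⬝ᵥ grad z := by
    rw [dot_mulVec_comm (posDef_transpose hSpd), mulVec_mulVec, mul_nonsing_inv _ hdet, one_mulVec]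
  have h5 : (S *ᵥ v) ⬝ᵥ (S *ᵥ v) = v ⬝ᵥ (hess xstar *ᵥ v) := by
    rw [dot_mulVec_comm (posDef_transpose hSpd), mulVec_mulVec, hSsq]
  simp only [sub_dotProduct, dotProduct_sub, smul_dotProduct, dotProduct_smul, smul_eq_mul,
    dotProduct_comm (S *ᵥ v) (S⁻¹ *ᵥ grad z), h4, h5] at h3
  have hc : 0 < 1 + D := by linarith
  refine h1.trans (le_of_mul_le_mul_left ?_ hc)
  linarith

end SSCProblem

/-! ### One iteration in normalised coordinates -/

/-- The Hessian approximation `B` in the coordinates in which `c S²` becomes the identity. -/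
def normalised {d : ℕ} (S : Matrix (Fin d) (Fin d) ℝ) (c : ℝ) (B : Matrix (Fin d) (Fin d) ℝ) :
    Matrix (Fin d) (Fin d) ℝ :=
  c⁻¹ • (S⁻¹ * B * S⁻¹)

lemma normalised_posDef {d : ℕ} {S B : Matrix (Fin d) (Fin d) ℝ} {c : ℝ} (hS : S.PosDef)
    (hc : 0 < c) (hB : B.PosDef) : (normalised S c B).PosDef := by
  have hSi := hS.inv
  have h := hB.conjTranspose_mul_mul_same (B := S⁻¹) (mulVec_injective_of_isUnit hSi.isUnit)
  rw [conjTranspose_eq_transpose_of_trivial, posDef_transpose hSi] at h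
  exact h.smul (inv_pos.2 hc)

lemma normalised_mulVec {d : ℕ} {S : Matrix (Fin d) (Fin d) ℝ} (hS : S.PosDef) (c : ℝ)
    (B : Matrix (Fin d) (Fin d) ℝ) (s : Fin d → ℝ) :
    normalised S c B *ᵥ (S *ᵥ s) = c⁻¹ • (S⁻¹ *ᵥ (B *ᵥ s)) := by
  have hdet : IsUnit S.det := (isUnit_iff_isUnit_det S).1 hS.isUnit
  rw [normalised, smul_mulVec, mulVec_mulVec, mul_assoc, nonsing_inv_mul _ hdet, mul_one,
    mulVec_mulVec]

lemma dot_inv_mulVec {d : ℕ} {S : Matrix (Fin d) (Fin d) ℝ} (hS : S.PosDef) (u v : Fin d → ℝ) :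
    (S *ᵥ u) ⬝ᵥ (S⁻¹ *ᵥ v) = u ⬝ᵥ v := by
  have hdet : IsUnit S.det := (isUnit_iff_isUnit_det S).1 hS.isUnit
  rw [dotProduct_comm, dot_mulVec_comm (posDef_transpose hS), mulVec_mulVec,
    mul_nonsing_inv _ hdet, one_mulVec]

/-- The BFGS update commutes with the change of coordinates. -/
lemma normalised_bfgsUpdate {d : ℕ} {S B : Matrix (Fin d) (Fin d) ℝ} {c : ℝ} (hS : S.PosDef)
    (hc : 0 < c) (hB : B.PosDef) (s y : Fin d → ℝ) :
    normalised S c (bfgsUpdate B s y)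
      = bfgsUpdate (normalised S c B) (S *ᵥ s) (c⁻¹ • (S⁻¹ *ᵥ y)) := by
  have hSt := posDef_transpose hS.inv
  have hvm : ∀ u v : Fin d → ℝ, S⁻¹ * vecMulVec u v * S⁻¹ = vecMulVec (S⁻¹ *ᵥ u) (S⁻¹ *ᵥ v) := by
    intro u v
    rw [mul_vecMulVec, vecMulVec_mul, ← mulVec_transpose, hSt]
  rw [bfgsUpdate, bfgsUpdate, posDef_transpose (normalised_posDef hS hc hB), posDef_transpose hB,
    normalised_mulVec hS]
  simp only [dotProduct_smul, dot_inv_mulVec hS, normalised, mul_add, add_mul, mul_sub, sub_mul,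
    mul_smul_comm, smul_mul_assoc, hvm, smul_add, smul_sub, smul_vecMulVec, vecMulVec_smul,
    smul_smul, smul_eq_mul, mul_inv, inv_inv]
  congr 2
  · congr 1
    field_simp
  · field_simp

namespace SSCProblem

variable {d : ℕ} {f : (Fin d → ℝ) → ℝ} {grad : (Fin d → ℝ) → (Fin d → ℝ)}
  {hess : (Fin d → ℝ) → Matrix (Fin d) (Fin d) ℝ} {M : ℝ} {xstar : Fin d → ℝ}

/-- In normalised coordinates one BFGS step changes `Ψ` by at most `log k` with
`k = c (gᵀs)² / (‖S⁻¹ g‖² sᵀy)`, while the line search decreases `f` by at least the fraction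
`α (1 - β) k / c²` of the suboptimality. The bound `e k ≥ 2 + log k` combines the two. -/
lemma step (P : SSCProblem f grad hess M xstar) {S : Matrix (Fin d) (Fin d) ℝ}
    (hSpd : S.PosDef) (hSsq : S * S = hess xstar) {D α β η : ℝ} (hα : 0 < α) (hβ : β < 1)
    (hη : 0 < η) {B : Matrix (Fin d) (Fin d) ℝ} (hB : B.PosDef) {x x' : Fin d → ℝ}
    (hx' : x' = x + η • (-(B⁻¹ *ᵥ grad x)))
    (h1 : f x' ≤ f x + α * η * (grad x ⬝ᵥ (-(B⁻¹ *ᵥ grad x))))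
    (h2 : grad x' ⬝ᵥ (-(B⁻¹ *ᵥ grad x)) ≥ β * (grad x ⬝ᵥ (-(B⁻¹ *ᵥ grad x))))
    (hx : scaledLength M (hess xstar) (x - xstar) ≤ D)
    (hxx : scaledLength M (hess xstar) (x' - xstar) ≤ D) :
    (bfgsUpdate B (x' - x) (grad x' - grad x)).PosDef ∧
      f x' - f xstar ≤ (f x - f xstar) * Real.exp (-(α * (1 - β) / (1 + D) ^ 2 * (Real.exp (-1) *
        (2 + Psi d (normalised S (1 + D) (bfgsUpdate B (x' - x) (grad x' - grad x)))
          - Psi d (normalised S (1 + D) B))))) := by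
  have hD : 0 ≤ D := (P.scaledLength_nonneg _ _).trans hx
  have hc : 0 < 1 + D := by linarith
  have hdom := P.subopt_le hSpd hSsq hx
  have hβ' : 0 < 1 - β := by linarith
  have hC : 0 ≤ f x - f xstar := by linarith [P.isMin x]
  have hC' : 0 ≤ f x' - f xstar := by linarith [P.isMin x']
  by_cases hg : grad x = 0
  · -- at a stationary point the step vanishes and the update leaves `B` unchanged
    have hxe : x' = x := by rw [hx', hg]; simp
    have h0 : f x - f xstar = 0 := by
      rw [hg] at hdom
      simp only [mulVec_zero, dotProduct_zero, mul_zero] at hdom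
      linarith
    have hBe : bfgsUpdate B (x' - x) (grad x' - grad x) = B := by
      simp [hxe, bfgsUpdate]
    rw [hBe, hxe, h0]
    exact ⟨hB, by simp⟩
  have hdetB : IsUnit B.det := (isUnit_iff_isUnit_det B).1 hB.isUnit
  set g := grad x with hgdef
  set s := x' - x with hs
  set y := grad x' - g with hy
  have hs' : s = η • (-(B⁻¹ *ᵥ g)) := by
    rw [hs, hx', add_sub_cancel_left]
  have hBs : B *ᵥ s = -(η • g) := by
    rw [hs', mulVec_smul, mulVec_neg, mulVec_mulVec, mul_nonsing_inv _ hdetB, one_mulVec, smul_neg]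
  set G := -(s ⬝ᵥ g) with hGdef
  have hG : 0 < G := by
    have := posDef_dot_pos hB.inv hg
    rw [hGdef, hs', smul_dotProduct, neg_dotProduct, dotProduct_comm, smul_eq_mul]
    nlinarith
  have hdec : f x' ≤ f x - α * G := by
    have e : α * η * (g ⬝ᵥ (-(B⁻¹ *ᵥ g))) = -(α * G) := by
      rw [hGdef, hs', smul_dotProduct, dotProduct_comm g, smul_eq_mul]
      ring
    linarith
  have hY : (1 - β) * G ≤ s ⬝ᵥ y := by
    have e : s ⬝ᵥ y = η * (grad x' ⬝ᵥ (-(B⁻¹ *ᵥ g))) + G := by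
      rw [hy, dotProduct_sub, hGdef, sub_eq_add_neg]
      congr 1
      rw [hs', smul_dotProduct, dotProduct_comm _ (grad x'), smul_eq_mul]
    have e2 : η * (g ⬝ᵥ (-(B⁻¹ *ᵥ g))) = -G := by
      rw [hGdef, neg_neg, hs', smul_dotProduct, dotProduct_comm _ g, smul_eq_mul]
    have := mul_le_mul_of_nonneg_left h2.le hη.le
    rw [e]
    nlinarith
  have hYpos : 0 < s ⬝ᵥ y := lt_of_lt_of_le (by positivity) hY
  set c := 1 + D with hcdef
  have hsy' : (S *ᵥ s) ⬝ᵥ (c⁻¹ • (S⁻¹ *ᵥ y)) = c⁻¹ * (s ⬝ᵥ y) := by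
    rw [dotProduct_smul, dot_inv_mulVec hSpd, smul_eq_mul]
  -- the average Hessian on the segment is at most `c ∇²f(xstar)`
  have hyy : (c⁻¹ • (S⁻¹ *ᵥ y)) ⬝ᵥ (c⁻¹ • (S⁻¹ *ᵥ y)) ≤ (S *ᵥ s) ⬝ᵥ (c⁻¹ • (S⁻¹ *ᵥ y)) := by
    have hxs : x + s = x' := by rw [hs]; abel
    have hdetS : IsUnit S.det := (isUnit_iff_isUnit_det S).1 hSpd.isUnit
    have h := P.cocoercive (s := s) hx (by rwa [hxs]) (c⁻¹ • (S⁻¹ *ᵥ (S⁻¹ *ᵥ y)))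
    rw [hxs, ← hgdef, ← hy, ← hSsq] at h
    have e1 : (S * S) *ᵥ (c⁻¹ • (S⁻¹ *ᵥ (S⁻¹ *ᵥ y))) = c⁻¹ • y := by
      rw [mulVec_smul, mulVec_mulVec, mulVec_mulVec, mul_assoc S S,
        mul_nonsing_inv _ hdetS, mul_one, mul_nonsing_inv _ hdetS, one_mulVec]
    have e2 : (S⁻¹ *ᵥ (S⁻¹ *ᵥ y)) ⬝ᵥ y = (S⁻¹ *ᵥ y) ⬝ᵥ (S⁻¹ *ᵥ y) := by
      rw [dotProduct_comm, dot_mulVec_comm (posDef_transpose hSpd.inv)]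
    rw [e1, ← hcdef] at h
    rw [hsy']
    simp only [smul_dotProduct, dotProduct_smul, smul_eq_mul, e2] at h ⊢
    rw [mul_inv_cancel_left₀ hc.ne'] at h
    apply mul_le_mul_of_nonneg_left _ (inv_pos.2 hc).le
    linarith
  have hΨ := Psi_bfgs_le (normalised_posDef hSpd hc hB) (by rw [hsy']; positivity) hyy
  rw [← normalised_bfgsUpdate hSpd hc hB, normalised_mulVec hSpd, hsy', hBs] at hΨ
  set q := (S⁻¹ *ᵥ g) ⬝ᵥ (S⁻¹ *ᵥ g) with hq
  have hqpos : 0 < q := by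
    apply dot_self_pos
    intro h
    have hdetS : IsUnit S.det := (isUnit_iff_isUnit_det S).1 hSpd.isUnit
    apply hg
    rw [← one_mulVec g, ← mul_nonsing_inv _ hdetS, ← mulVec_mulVec, h, mulVec_zero]
  set k := c * G ^ 2 / (q * (s ⬝ᵥ y)) with hk
  have hkpos : 0 < k := by positivity
  have hke : ((S *ᵥ s) ⬝ᵥ (c⁻¹ • (S⁻¹ *ᵥ (-(η • g))))) ^ 2 /
      (((c⁻¹ • (S⁻¹ *ᵥ (-(η • g)))) ⬝ᵥ (c⁻¹ • (S⁻¹ *ᵥ (-(η • g))))) * (c⁻¹ * (s ⬝ᵥ y))) = k := by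
    simp only [dotProduct_smul, smul_dotProduct, dot_inv_mulVec hSpd, mulVec_neg, mulVec_smul,
      neg_dotProduct, dotProduct_neg, smul_eq_mul, ← hq, hk, hGdef]
    field_simp
  rw [hke] at hΨ
  refine ⟨bfgs_posDef hB hYpos, ?_⟩
  set Δ := Psi d (normalised S c (bfgsUpdate B s y)) - Psi d (normalised S c B) with hΔ
  have hexp : Real.exp (-1) * (2 + Δ) ≤ k := by
    have h := Real.add_one_le_exp (Real.log k + 1)
    rw [Real.exp_add, Real.exp_log hkpos] at h
    have e : Real.exp (-1) * (k * Real.exp 1) = k := by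
      rw [mul_comm k, ← mul_assoc, ← Real.exp_add]
      simp
    rw [← e]
    apply mul_le_mul_of_nonneg_left _ (Real.exp_pos _).le
    linarith
  have hκ : 0 < α * (1 - β) / c ^ 2 := by positivity
  have hfrac : α * (1 - β) / c ^ 2 * k * (f x - f xstar) ≤ α * G := by
    calc α * (1 - β) / c ^ 2 * k * (f x - f xstar)
        ≤ α * (1 - β) / c ^ 2 * k * (c * q) := by gcongr
      _ = α * G * ((1 - β) * G / (s ⬝ᵥ y)) := by rw [hk]; field_simp
      _ ≤ α * G * 1 := by
          gcongr
          rwa [div_le_one hYpos]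
      _ = α * G := mul_one _
  have hle : 1 - α * (1 - β) / c ^ 2 * k ≤ Real.exp (-(α * (1 - β) / c ^ 2 * k)) := by
    linarith [Real.add_one_le_exp (-(α * (1 - β) / c ^ 2 * k))]
  have hmon : Real.exp (-(α * (1 - β) / c ^ 2 * k))
      ≤ Real.exp (-(α * (1 - β) / c ^ 2 * (Real.exp (-1) * (2 + Δ)))) := by
    gcongr
  rw [add_sub_assoc, ← hΔ]
  calc f x' - f xstar ≤ (f x - f xstar) * (1 - α * (1 - β) / c ^ 2 * k) := by linarith
    _ ≤ _ := mul_le_mul_of_nonneg_left (hle.trans hmon) hC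

end SSCProblem

/-! ### The main estimate -/

/-- After `t₀` iterations the suboptimality is at most `δ₁` (Lemma 2, first part). -/
theorem bfgs_suboptimality_small_after_t0 {d : ℕ}
    (f : (Fin d → ℝ) → ℝ)
    (grad : (Fin d → ℝ) → (Fin d → ℝ))
    (hess : (Fin d → ℝ) → Matrix (Fin d) (Fin d) ℝ)
    (hf : ContDiff ℝ 2 f)
    (hgrad : ∀ x v, fderiv ℝ f x v = grad x ⬝ᵥ v)
    (hhess : ∀ x v, fderiv ℝ grad x v = hess x *ᵥ v)
    (hpd : ∀ x, (hess x).PosDef)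
    (M : ℝ) (hM : 0 < M)
    (hssc : StronglySelfConcordant hess M)
    (xstar : Fin d → ℝ) (hmin : ∀ y, f xstar ≤ f y)
    (α β : ℝ) (hα0 : 0 < α) (hα : α < 1/2) (hαβ : α < β) (hβ : β < 1)
    (x : ℕ → Fin d → ℝ) (B : ℕ → Matrix (Fin d) (Fin d) ℝ) (η : ℕ → ℝ)
    (hB0symm : (B 0).IsSymm) (hB0pd : (B 0).PosDef)
    (hx0 : f xstar < f (x 0))
    (hη : ∀ t, 0 < η t)
    (hxupd : ∀ t, x (t+1) = x t + η t • (-((B t)⁻¹ *ᵥ grad (x t))))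
    (hBupd : ∀ t, B (t+1) = bfgsUpdate (B t) (x (t+1) - x t) (grad (x (t+1)) - grad (x t)))
    (hAW1 : ∀ t, f (x (t+1)) ≤
      f (x t) + α * η t * (grad (x t) ⬝ᵥ (-((B t)⁻¹ *ᵥ grad (x t)))))
    (hAW2 : ∀ t, grad (x (t+1)) ⬝ᵥ (-((B t)⁻¹ *ᵥ grad (x t))) ≥
      β * (grad (x t) ⬝ᵥ (-((B t)⁻¹ *ᵥ grad (x t)))))
    (C : ℕ → ℝ) (hC : ∀ t, C t = f (x t) - f xstar)
    (D : ℕ → ℝ) (hD : ∀ t, 0 ≤ D t ∧ omegaFn (D t / 2) = M ^ 2 * C t / 4)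
    (S : Matrix (Fin d) (Fin d) ℝ) (hSpd : S.PosDef) (hSsq : S * S = hess xstar)
    (Bbar : Matrix (Fin d) (Fin d) ℝ)
    (hBbar : Bbar = (1 + D 0)⁻¹ • (S⁻¹ * B 0 * S⁻¹))
    (δ₁ t₀ : ℝ)
    (hδ₁ : δ₁ = min (1/16) (min ((4 / M ^ 2) * omegaFn (1/32))
      (min ((4 / M ^ 2) * omegaFn ((Real.sqrt (2 * (1 - α)) - 1) / 2))
        ((4 / M ^ 2) * omegaFn ((1/2) * (1 / Real.sqrt (1 - β) - 1))))))
    (ht₀ : t₀ = max (Psi d Bbar)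
      (3 * (1 + D 0) ^ 2 / (α * (1 - β)) * Real.log (C 0 / δ₁))) :
    ∀ t : ℕ, t₀ ≤ (t : ℝ) → C t ≤ δ₁ := by
  have P : SSCProblem f grad hess M xstar := ⟨hf, hgrad, hhess, hpd, hM, hssc, hmin⟩
  have hD0 := (hD 0).1
  have hc : 0 < 1 + D 0 := by linarith
  have hβ' : 0 < 1 - β := by linarith
  have hC0 : 0 < C 0 := by rw [hC]; linarith
  have hδpos : 0 < δ₁ := by
    have hα1 : 1 < Real.sqrt (2 * (1 - α)) := by
      rw [Real.lt_sqrt] <;> linarith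
    have hβ1 : 1 < 1 / Real.sqrt (1 - β) := by
      rw [one_lt_div (Real.sqrt_pos.2 hβ'), Real.sqrt_lt' one_pos]
      linarith
    have h4 : 0 < 4 / M ^ 2 := by positivity
    rw [hδ₁]
    refine lt_min (by norm_num) (lt_min ?_ (lt_min ?_ ?_)) <;>
      refine mul_pos h4 (omegaFn_pos ?_) <;> linarith
  set κ := α * (1 - β) / (1 + D 0) ^ 2 with hκ
  have hκpos : 0 < κ := by positivity
  set Ψ : ℕ → ℝ := fun t => Psi d (normalised S (1 + D 0) (B t)) with hΨ
  -- telescoping the one-step estimate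
  have main : ∀ t : ℕ, (B t).PosDef ∧ C t ≤ C 0 ∧
      C t ≤ C 0 * Real.exp (-(κ * (Real.exp (-1) * (2 * t + Ψ t - Ψ 0)))) := by
    intro t
    induction t with
    | zero => exact ⟨hB0pd, le_rfl, by simp⟩
    | succ t ih =>
      obtain ⟨hB, hle, hbound⟩ := ih
      have hdesc : C (t + 1) ≤ C t := by
        have h := hAW1 t
        have h2 := posDef_dot_nonneg hB.inv (grad (x t))
        rw [dotProduct_neg] at h
        have h3 := mul_nonneg (mul_pos hα0 (hη t)).le h2
        rw [hC, hC]
        linarith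
      have hlen : ∀ i, C i ≤ C 0 → scaledLength M (hess xstar) (x i - xstar) ≤ D 0 :=
        fun i hi => P.scaledLength_le hD0 (hD 0).2 (by rw [← hC]; exact hi)
      obtain ⟨hpd', hdec⟩ := P.step hSpd hSsq hα0 hβ (hη t) hB (hxupd t) (hAW1 t) (hAW2 t)
        (hlen t hle) (hlen (t + 1) (hdesc.trans hle))
      rw [← hBupd t] at hpd' hdec
      rw [← hC, ← hC] at hdec
      refine ⟨hpd', hdesc.trans hle, hdec.trans ?_⟩
      refine (mul_le_mul_of_nonneg_right hbound (Real.exp_pos _).le).trans (le_of_eq ?_)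
      rw [mul_assoc, ← Real.exp_add]
      congr 2
      simp only [hΨ]
      push_cast
      ring
  intro t ht
  obtain ⟨hB, -, hbound⟩ := main t
  have hΨt : 0 ≤ Ψ t := Psi_nonneg (normalised_posDef hSpd hc hB)
  have hΨ0 : Ψ 0 = Psi d Bbar := by rw [hBbar]; rfl
  have ht1 : Ψ 0 ≤ t := by
    rw [hΨ0]
    exact (le_max_left _ _).trans (ht₀ ▸ ht)
  have ht2 : 3 * (1 + D 0) ^ 2 / (α * (1 - β)) * Real.log (C 0 / δ₁) ≤ t :=
    (le_max_right _ _).trans (ht₀ ▸ ht)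
  have hlog : Real.log (C 0 / δ₁) ≤ κ * (t / 3) := by
    have e : 3 * (1 + D 0) ^ 2 / (α * (1 - β)) * Real.log (C 0 / δ₁)
        = 3 / κ * Real.log (C 0 / δ₁) := by
      rw [hκ]
      field_simp
    rw [e, div_mul_eq_mul_div, div_le_iff₀ hκpos] at ht2
    linarith
  -- here `e < 3` enters
  have hthird : (t : ℝ) / 3 ≤ Real.exp (-1) * (2 * t + Ψ t - Ψ 0) := by
    have h3 : (1 : ℝ) / 3 ≤ Real.exp (-1) := by
      rw [Real.exp_neg, one_div]
      exact inv_anti₀ (Real.exp_pos 1) Real.exp_one_lt_three.le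
    have h4 : (t : ℝ) ≤ 2 * t + Ψ t - Ψ 0 := by linarith
    have h5 : (0 : ℝ) ≤ t := Nat.cast_nonneg t
    calc (t : ℝ) / 3 = 1 / 3 * t := by ring
      _ ≤ Real.exp (-1) * (2 * t + Ψ t - Ψ 0) := by gcongr
  calc C t ≤ C 0 * Real.exp (-(κ * (Real.exp (-1) * (2 * t + Ψ t - Ψ 0)))) := hbound
    _ ≤ C 0 * Real.exp (-Real.log (C 0 / δ₁)) := by
        gcongr
        exact hlog.trans (mul_le_mul_of_nonneg_left hthird hκpos.le)
    _ = δ₁ := by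
        rw [Real.exp_neg, Real.exp_log (by positivity)]
        field_simp
end
end

section
/- Let f satisfy the stated assumptions, let x ∈ ℝ^d, and set C := f(x) − f(x_*) and D := 2ω⁻¹(M²C/4) (with D := 0 if C = 0). Then (1/(1+D))·∇²f(x_*) ⪯ ∇²f(x) ⪯ (1+D)·∇²f(x_*). -/
/-!
Write `h = x - x⋆`, `r = ‖h‖_{x⋆}` and `u = M r`. Strong self-concordance with the pair `(x⋆, x)`
and the norm at `x⋆` gives both matrix inequalities with `u` in place of `D`, so everything
reduces to `u ≤ D` (`loewnerLE_of_le` then enlarges the constant). Since `ω` is strictly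
increasing, this amounts to `4 ω(u/2) ≤ M² (f x - f x⋆)`.

For the latter, put `φ t = f (x⋆ + t h)`. Comparing `∇²f(x⋆)` with `∇²f(x⋆ + t h)`, again in the
norm at `x⋆`, gives `M² φ''(t) ≥ u² / (1 + u t) ≥ u² / (1 + u t / 2)²`, and the right-hand side is
the second derivative of `t ↦ 4 ω(u t / 2)`. Both functions (after subtracting `f x⋆`) vanish with
their first derivatives at `0`, so `second_order_comparison` concludes at `t = 1`.
-/

open Matrix Real Finset

noncomputable section

/-- Nonnegativity on `[0, ∞)` from the derivative and the value at `0`. -/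
lemma nonneg_of_deriv_nonneg {p p' : ℝ → ℝ} (hp : ∀ t, 0 ≤ t → HasDerivAt p (p' t) t)
    (h0 : p 0 = 0) (hp' : ∀ t, 0 ≤ t → 0 ≤ p' t) {t : ℝ} (ht : 0 ≤ t) : 0 ≤ p t := by
  have hmono : MonotoneOn p (Set.Ici 0) := by
    refine monotoneOn_of_deriv_nonneg (convex_Ici 0)
      (fun s hs => (hp s hs).continuousAt.continuousWithinAt) ?_ ?_
    · intro s hs
      rw [interior_Ici] at hs
      exact (hp s (le_of_lt hs)).differentiableAt.differentiableWithinAt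
    · intro s hs
      rw [interior_Ici] at hs
      rw [(hp s (le_of_lt hs)).deriv]
      exact hp' s (le_of_lt hs)
  rw [← h0]
  exact hmono Set.self_mem_Ici ht ht

/-- Scalar form of the bound `4 ω(u/2) ≤ M² (f x - f x⋆)`: `φ` is the restriction of `f` to the
line through `x⋆` and `x`, and `φ 1 - φ 0` is bounded below by two integrations. -/
lemma second_order_comparison {φ φ' φ'' : ℝ → ℝ} {M u : ℝ} (hu : 0 ≤ u)
    (h1 : ∀ t, 0 ≤ t → HasDerivAt φ (φ' t) t) (h2 : ∀ t, 0 ≤ t → HasDerivAt φ' (φ'' t) t)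
    (h0 : φ' 0 = 0) (h : ∀ t, 0 ≤ t → u ^ 2 ≤ (1 + u * t) * (M ^ 2 * φ'' t)) :
    4 * omegaFn (u / 2) ≤ M ^ 2 * (φ 1 - φ 0) := by
  have hlin : ∀ t : ℝ, HasDerivAt (fun t => u * t / 2) (u / 2) t := fun t => by
    simpa using ((hasDerivAt_id t).const_mul u).div_const 2
  have hpos : ∀ t : ℝ, 0 ≤ t → 0 < 1 + u * t / 2 := fun t ht => by positivity
  have key' : ∀ t, 0 ≤ t →
      0 ≤ M ^ 2 * φ' t - 4 * (u / 2 - (u / 2) * (1 + u * t / 2)⁻¹) := by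
    intro t ht
    refine nonneg_of_deriv_nonneg
      (p := fun t => M ^ 2 * φ' t - 4 * (u / 2 - (u / 2) * (1 + u * t / 2)⁻¹))
      (p' := fun t => M ^ 2 * φ'' t - u ^ 2 / (1 + u * t / 2) ^ 2) ?_ ?_ ?_ ht
    · intro s hs
      have := ((h2 s hs).const_mul (M ^ 2)).sub
        ((((((hlin s).const_add 1).inv (hpos s hs).ne').const_mul (u / 2)).const_sub
          (u / 2)).const_mul 4)
      refine this.congr_deriv ?_
      ring
    · simp [h0]
    · intro s hs
      have hs1 : 0 < 1 + u * s := by positivity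
      have hq : 0 ≤ M ^ 2 * φ'' s := by
        by_contra hneg
        nlinarith [h s hs, sq_nonneg u, mul_neg_of_pos_of_neg hs1 (not_le.mp hneg)]
      rw [sub_nonneg, div_le_iff₀ (pow_pos (hpos s hs) 2)]
      nlinarith [h s hs, mul_nonneg hq (sq_nonneg (u * s / 2))]
  have key : 0 ≤ M ^ 2 * (φ 1 - φ 0) - 4 * (u * 1 / 2 - Real.log (1 + u * 1 / 2)) := by
    refine nonneg_of_deriv_nonneg
      (p := fun t => M ^ 2 * (φ t - φ 0) - 4 * (u * t / 2 - Real.log (1 + u * t / 2)))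
      (p' := fun t => M ^ 2 * φ' t - 4 * (u / 2 - (u / 2) * (1 + u * t / 2)⁻¹))
      ?_ ?_ key' zero_le_one
    · intro s hs
      have := (((h1 s hs).sub_const (φ 0)).const_mul (M ^ 2)).sub
        (((hlin s).sub (((hlin s).const_add 1).log (hpos s hs).ne')).const_mul 4)
      refine this.congr_deriv ?_
      rw [div_eq_mul_inv (u / 2)]
    · simp
  unfold omegaFn
  rw [mul_one] at key
  linarith

/-- A one-sided comparison `A - B ⪯ u B` yields both forms of the bound with any `D ≥ u`. -/
lemma loewnerLE_of_le {d : ℕ} {A B : Matrix (Fin d) (Fin d) ℝ} {u D : ℝ} (hB : B.PosDef)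
    (h : loewnerLE (A - B) (u • B)) (hu : 0 ≤ u) (huD : u ≤ D) :
    loewnerLE A ((1 + D) • B) ∧ loewnerLE ((1 + D)⁻¹ • A) B := by
  have h1 : loewnerLE A ((1 + D) • B) := by
    unfold loewnerLE at *
    have := h.add (hB.posSemidef.smul (sub_nonneg.mpr huD))
    convert this using 1
    module
  refine ⟨h1, ?_⟩
  have hD : 0 < 1 + D := by linarith
  unfold loewnerLE at *
  have := h1.smul (inv_nonneg.mpr hD.le)
  rwa [smul_sub, smul_smul, inv_mul_cancel₀ hD.ne', one_smul] at this

/-- Hessian comparison with the Hessian at the optimum (Lemma 4(a)). -/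
theorem hessian_comparison_at_point {d : ℕ}
    (f : (Fin d → ℝ) → ℝ)
    (grad : (Fin d → ℝ) → (Fin d → ℝ))
    (hess : (Fin d → ℝ) → Matrix (Fin d) (Fin d) ℝ)
    (hf : ContDiff ℝ 2 f)
    (hgrad : ∀ x v, fderiv ℝ f x v = grad x ⬝ᵥ v)
    (hhess : ∀ x v, fderiv ℝ grad x v = hess x *ᵥ v)
    (hpd : ∀ x, (hess x).PosDef)
    (M : ℝ) (hM : 0 < M)
    (hssc : StronglySelfConcordant hess M)
    (xstar : Fin d → ℝ) (hmin : ∀ y, f xstar ≤ f y)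
    (x : Fin d → ℝ) (C D : ℝ) (hCdef : C = f x - f xstar)
    (hDdef : 0 ≤ D ∧ omegaFn (D / 2) = M ^ 2 * C / 4)
 :
    loewnerLE ((1 + D)⁻¹ • hess xstar) (hess x) ∧
    loewnerLE (hess x) ((1 + D) • hess xstar) := by
  obtain ⟨hD0, hD⟩ := hDdef
  set h : Fin d → ℝ := x - xstar with hh
  set r : ℝ := Real.sqrt (h ⬝ᵥ (hess xstar *ᵥ h)) with hr
  have hr0 : 0 ≤ r := Real.sqrt_nonneg _
  have hq : 0 ≤ h ⬝ᵥ (hess xstar *ᵥ h) := by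
    simpa using (hpd xstar).posSemidef.dotProduct_mulVec_nonneg h
  have hr2 : r ^ 2 = h ⬝ᵥ (hess xstar *ᵥ h) := Real.sq_sqrt hq
  have hu : 0 ≤ M * r := by positivity
  have hfd : Differentiable ℝ f := hf.differentiable (by norm_num)
  have hgradC : Differentiable ℝ grad := by
    have h1 : Differentiable ℝ (fderiv ℝ f) :=
      (hf.fderiv_right (m := 1) (by norm_num)).differentiable (by norm_num)
    rw [differentiable_pi]
    intro i
    have h2 : (fun y => grad y i) = fun y => fderiv ℝ f y (Pi.single i 1) := by
      funext y; rw [hgrad]; simp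
    rw [h2]
    exact h1.clm_apply (differentiable_const _)
  have hline : ∀ t : ℝ, HasDerivAt (fun t : ℝ => xstar + t • h) h t := fun t => by
    simpa using ((hasDerivAt_id t).smul_const h).const_add xstar
  have hg0 : grad xstar ⬝ᵥ h = 0 := by
    rw [← hgrad, IsLocalMin.fderiv_eq_zero (Filter.Eventually.of_forall hmin)]
    rfl
  have hmain : 4 * omegaFn (M * r / 2) ≤ M ^ 2 * (f x - f xstar) := by
    have := second_order_comparison (φ := fun t => f (xstar + t • h))
      (φ' := fun t => grad (xstar + t • h) ⬝ᵥ h)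
      (φ'' := fun t => h ⬝ᵥ (hess (xstar + t • h) *ᵥ h)) (M := M) hu ?_ ?_ ?_ ?_
    · simpa [hh] using this
    · intro t _
      have := (hfd (xstar + t • h)).hasFDerivAt.comp_hasDerivAt t (hline t)
      rwa [hgrad] at this
    · intro t _
      have h1 := (hgradC (xstar + t • h)).hasFDerivAt.comp_hasDerivAt t (hline t)
      rw [hhess, hasDerivAt_pi] at h1
      have h2 := HasDerivAt.fun_sum (u := Finset.univ) fun i _ => (h1 i).mul_const (h i)
      rw [dotProduct_comm]
      exact h2
    · simpa using hg0
    · intro t ht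
      have h1 := hssc xstar (xstar + t • h) xstar
      have h2 : Real.sqrt ((xstar - (xstar + t • h)) ⬝ᵥ
          (hess xstar *ᵥ (xstar - (xstar + t • h)))) = t * r := by
        have : xstar - (xstar + t • h) = (-t) • h := by module
        rw [this, mulVec_smul, smul_dotProduct, dotProduct_smul, ← hr2, smul_eq_mul, smul_eq_mul,
          show -t * (-t * r ^ 2) = (t * r) ^ 2 by ring, Real.sqrt_sq (by positivity)]
      rw [h2] at h1
      have h3 := PosSemidef.dotProduct_mulVec_nonneg h1 h
      rw [star_trivial] at h3
      rw [sub_mulVec, sub_mulVec, smul_mulVec, dotProduct_sub, dotProduct_sub, dotProduct_smul,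
        ← hr2, smul_eq_mul] at h3
      nlinarith [mul_nonneg (sq_nonneg M) h3]
  have huD : M * r ≤ D := by
    by_contra hlt
    have := omegaFn_lt (a := D / 2) (b := M * r / 2) (by linarith) (by linarith)
    rw [hD, hCdef] at this
    linarith
  have hneg : xstar - x = -h := by rw [hh]; abel
  have hA := hssc x xstar xstar
  have hB := hssc xstar x xstar
  rw [hneg, mulVec_neg, neg_dotProduct_neg] at hB
  exact ⟨(loewnerLE_of_le (hpd x) hB hu huD).2, (loewnerLE_of_le (hpd xstar) hA hu huD).1⟩
end
end

section
/- Let f satisfy the stated assumptions, let x ∈ ℝ^d, and set C := f(x) − f(x_*) and D := 2ω⁻¹(M²C/4) (with D := 0 if C = 0). Then for every τ ∈ [0,1]: (1/(1+D))·∇²f(x_*) ⪯ ∇²f(x + τ(x_* − x)) ⪯ (1+D)·∇²f(x_*). -/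
/-!
For `c = M ‖x_τ − x_*‖_z`, strong self-concordance compares the Hessians at `x_τ` and `x_*` in both
directions with the factor `1 + c`, and the point `z` of the local norm may be chosen freely.
Hence it suffices to find one `z` with `M ‖x − x_*‖_z ≤ D`. By Taylor's formula with Lagrange
remainder at the minimizer (`exists_hess_quadForm_eq`) some `z` on the segment satisfies
`‖x − x_*‖_z² = 2C`, and `ω(u) ≤ u² / 2` for `u ≥ 0` (`omegaFn_le_sq_div_two`) turns
`ω(D/2) = M² C / 4` into `2 M² C ≤ D²`.
-/

open Matrix Real Finset

noncomputable section

lemma omegaFn_le_sq_div_two {u : ℝ} (hu : 0 ≤ u) : omegaFn u ≤ u ^ 2 / 2 := by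
  have h := Real.le_log_one_add_of_nonneg hu
  have h2 : u - u ^ 2 / 2 ≤ 2 * u / (u + 2) := by
    rw [le_div_iff₀ (by linarith)]
    nlinarith [pow_nonneg hu 3]
  unfold omegaFn
  linarith

/-- The gradient of a `C²` function, given by its coordinates against the dot product, is
differentiable, since its coordinates are partial derivatives. -/
lemma differentiable_of_fderiv_eq_dotProduct {d : ℕ} {f : (Fin d → ℝ) → ℝ}
    {grad : (Fin d → ℝ) → (Fin d → ℝ)} (hf : ContDiff ℝ 2 f)
    (hgrad : ∀ x v, fderiv ℝ f x v = grad x ⬝ᵥ v) : Differentiable ℝ grad := by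
  have hd : Differentiable ℝ (fderiv ℝ f) :=
    (hf.fderiv_right (m := 1) (by norm_num)).differentiable (by norm_num)
  rw [differentiable_pi]
  intro i
  have : (fun x => grad x i) = fun x => fderiv ℝ f x (Pi.single i 1) := by
    funext x
    rw [hgrad]
    simp
  rw [this]
  exact hd.clm_apply (differentiable_const _)

/-- Second-order Taylor formula with Lagrange remainder, expanded at a global minimizer `p`. -/
lemma exists_hess_quadForm_eq {d : ℕ} {f : (Fin d → ℝ) → ℝ}
    {grad : (Fin d → ℝ) → (Fin d → ℝ)} {hess : (Fin d → ℝ) → Matrix (Fin d) (Fin d) ℝ}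
    (hf : ContDiff ℝ 2 f)
    (hgrad : ∀ x v, fderiv ℝ f x v = grad x ⬝ᵥ v)
    (hhess : ∀ x v, fderiv ℝ grad x v = hess x *ᵥ v)
    {p : Fin d → ℝ} (hmin : ∀ y, f p ≤ f y) (h : Fin d → ℝ) :
    ∃ z, h ⬝ᵥ (hess z *ᵥ h) = 2 * (f (p + h) - f p) := by
  have hdg := differentiable_of_fderiv_eq_dotProduct hf hgrad
  have hline : ∀ t : ℝ, HasDerivAt (fun t : ℝ => p + t • h) h t := fun t => by
    simpa using ((hasDerivAt_id t).smul_const h).const_add p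
  have hF : ∀ t : ℝ, HasDerivAt (fun t : ℝ => f (p + t • h)) (grad (p + t • h) ⬝ᵥ h) t :=
    fun t => by
      rw [← hgrad]
      exact ((hf.differentiable (by norm_num)) _).hasFDerivAt.comp_hasDerivAt t (hline t)
  have hG : ∀ t : ℝ, HasDerivAt (fun t : ℝ => grad (p + t • h) ⬝ᵥ h)
      (h ⬝ᵥ (hess (p + t • h) *ᵥ h)) t := fun t => by
    have h1 : HasDerivAt (fun t : ℝ => grad (p + t • h)) (hess (p + t • h) *ᵥ h) t := by
      rw [← hhess]
      exact (hdg _).hasFDerivAt.comp_hasDerivAt t (hline t)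
    rw [dotProduct_comm]
    rw [hasDerivAt_pi] at h1
    exact HasDerivAt.fun_sum fun i _ => (h1 i).mul_const (h i)
  have hG0 : grad (p + (0 : ℝ) • h) ⬝ᵥ h = 0 := by
    have hloc : IsLocalMin f p := Filter.Eventually.of_forall hmin
    rw [← hgrad, zero_smul, add_zero, hloc.fderiv_eq_zero]
    rfl
  -- Cauchy's mean value theorem against `t ↦ t²`, then the mean value theorem for the derivative.
  obtain ⟨c, hc, hce⟩ := exists_ratio_hasDerivAt_eq_ratio_slope (fun t : ℝ => f (p + t • h)) _
    (zero_lt_one' ℝ) (fun t _ => (hF t).continuousAt.continuousWithinAt) (fun t _ => hF t)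
    (fun t : ℝ => t ^ 2) (fun t => 2 * t) (by fun_prop)
    (fun t _ => by simpa using hasDerivAt_pow 2 t)
  obtain ⟨e, -, hee⟩ := exists_hasDerivAt_eq_slope (fun t : ℝ => grad (p + t • h) ⬝ᵥ h) _ hc.1
    (fun t _ => (hG t).continuousAt.continuousWithinAt) (fun t _ => hG t)
  have hc0 : c ≠ 0 := hc.1.ne'
  refine ⟨p + e • h, ?_⟩
  rw [hee, hG0, sub_zero, sub_zero, div_eq_iff hc0]
  simp only [one_smul, zero_smul, add_zero] at hce
  linarith

/-- One-sided comparison: the radius of strong self-concordance may be enlarged from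
`M ‖x − y‖_z` to any `D`. -/
lemma loewnerLE_of_stronglySelfConcordant {d : ℕ}
    {hess : (Fin d → ℝ) → Matrix (Fin d) (Fin d) ℝ} {M D : ℝ}
    (hpd : ∀ x, (hess x).PosDef) (hssc : StronglySelfConcordant hess M) {x y z : Fin d → ℝ}
    (hD : M * Real.sqrt ((x - y) ⬝ᵥ (hess z *ᵥ (x - y))) ≤ D) :
    loewnerLE (hess x) ((1 + D) • hess y) := by
  have h1 := hssc x y z
  have h2 := (hpd y).posSemidef.smul (sub_nonneg.2 hD)
  unfold loewnerLE at h1 ⊢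
  convert h1.add h2 using 1
  module

/-- Hessian comparison along the segment to the optimum (Lemma 4(b)). -/
theorem hessian_comparison_on_segment {d : ℕ}
    (f : (Fin d → ℝ) → ℝ)
    (grad : (Fin d → ℝ) → (Fin d → ℝ))
    (hess : (Fin d → ℝ) → Matrix (Fin d) (Fin d) ℝ)
    (hf : ContDiff ℝ 2 f)
    (hgrad : ∀ x v, fderiv ℝ f x v = grad x ⬝ᵥ v)
    (hhess : ∀ x v, fderiv ℝ grad x v = hess x *ᵥ v)
    (hpd : ∀ x, (hess x).PosDef)
    (M : ℝ) (hM : 0 < M)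
    (hssc : StronglySelfConcordant hess M)
    (xstar : Fin d → ℝ) (hmin : ∀ y, f xstar ≤ f y)
    (x : Fin d → ℝ) (C D : ℝ) (hCdef : C = f x - f xstar)
    (hDdef : 0 ≤ D ∧ omegaFn (D / 2) = M ^ 2 * C / 4)
    (τ : ℝ) (hτ : τ ∈ Set.Icc (0:ℝ) 1) :
    loewnerLE ((1 + D)⁻¹ • hess xstar) (hess (x + τ • (xstar - x))) ∧
    loewnerLE (hess (x + τ • (xstar - x))) ((1 + D) • hess xstar) := by
  obtain ⟨hD0, hD⟩ := hDdef
  obtain ⟨z, hz⟩ := exists_hess_quadForm_eq hf hgrad hhess hmin (x - xstar)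
  rw [add_sub_cancel, ← hCdef] at hz
  have hDsq : M ^ 2 * (2 * C) ≤ D ^ 2 := by
    have := omegaFn_le_sq_div_two (u := D / 2) (by linarith)
    rw [hD] at this
    linarith
  have hC : 0 ≤ C := by rw [hCdef]; exact sub_nonneg.2 (hmin x)
  have key : ∀ s : ℝ, s ^ 2 ≤ 1 → M * Real.sqrt ((s • (x - xstar)) ⬝ᵥ
      (hess z *ᵥ (s • (x - xstar)))) ≤ D := by
    intro s hs
    rw [mulVec_smul, smul_dotProduct, dotProduct_smul, hz, smul_eq_mul, smul_eq_mul]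
    apply abs_le_of_sq_le_sq' _ hD0 |>.2
    have hnn : 0 ≤ s * (s * (2 * C)) := by
      rw [← mul_assoc]
      exact mul_nonneg (mul_self_nonneg s) (by linarith)
    rw [mul_pow, Real.sq_sqrt hnn]
    refine le_trans (mul_le_mul_of_nonneg_left ?_ (sq_nonneg M)) hDsq
    nlinarith
  have hsq : (1 - τ) ^ 2 ≤ 1 := by nlinarith [hτ.1, hτ.2]
  have e1 : x + τ • (xstar - x) - xstar = (1 - τ) • (x - xstar) := by module
  have e2 : xstar - (x + τ • (xstar - x)) = (-(1 - τ)) • (x - xstar) := by module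
  constructor
  · have h := loewnerLE_of_stronglySelfConcordant (D := D) hpd hssc (x := xstar)
      (y := x + τ • (xstar - x)) (z := z) (by rw [e2]; exact key _ (by rwa [neg_sq]))
    unfold loewnerLE at h ⊢
    have hD1 : 1 + D ≠ 0 := by linarith
    convert h.smul (inv_nonneg.2 (by linarith : (0 : ℝ) ≤ 1 + D)) using 1
    rw [smul_sub (1 + D)⁻¹, smul_smul, inv_mul_cancel₀ hD1, one_smul]
  · exact loewnerLE_of_stronglySelfConcordant hpd hssc (z := z)
      (by rw [e1]; exact key _ hsq)
end
end

section
/- Let f satisfy the stated assumptions, let x, x' ∈ ℝ^d with f(x') ≤ f(x), and set C := f(x) − f(x_*) and D := 2ω⁻¹(M²C/4) (with D := 0 if C = 0). Then for every τ ∈ [0,1]: (1/(1+D))·∇²f(x_*) ⪯ ∇²f(x + τ(x' − x)) ⪯ (1+D)·∇²f(x_*). -/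
/-!
Write `r = ‖w - x_*‖_{x_*}` for the local norm at the minimiser. Strong self-concordance with the
norm taken at `x_*` gives `∇²f(x_*) ⪯ (1 + M r) ∇²f(w)` and `∇²f(w) ⪯ (1 + M r) ∇²f(x_*)`
(`hessian_le_of_local_norm_le`), so it suffices to show `M r ≤ D` for every `w` on the segment.
The set `{w | M r ≤ D}` is an ellipsoid, hence convex (`quadForm_segment_le`), so only the two
endpoints matter. For those, the growth bound `(4 / M²) ω(M r / 2) ≤ f(w) - f(x_*)`
(`omega_le_gap`) combines with strict monotonicity of `ω` and `ω(D / 2) = M² C / 4`.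

The growth bound is obtained by integrating twice along `t ↦ x_* + t v`, starting from the zero
derivative at the minimiser: the second derivative of `f` there is at least
`r² / (1 + M r t) ≥ r² / (1 + M r t / 2)²`, and the right-hand side is the second derivative of
`t ↦ (4 / M²) ω(M r t / 2)`.
-/

open Matrix Real Finset

noncomputable section

lemma omegaFn_strictMonoOn : StrictMonoOn omegaFn (Set.Ici 0) := by
  intro a ha b hb hab
  have ha' : (0:ℝ) ≤ a := ha
  have h1 : 0 < 1 + a := by linarith
  have h2 : 0 < 1 + b := by linarith
  have h3 : Real.log ((1 + b) / (1 + a)) < (1 + b) / (1 + a) - 1 :=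
    Real.log_lt_sub_one_of_pos (by positivity) (by
      rw [ne_eq, div_eq_one_iff_eq h1.ne']; intro h; linarith)
  rw [Real.log_div h2.ne' h1.ne'] at h3
  have h4 : (1 + b) / (1 + a) - 1 ≤ b - a := by
    rw [div_sub_one h1.ne', div_le_iff₀ h1]
    nlinarith
  unfold omegaFn
  linarith

lemma hasDerivAt_omegaFn_s14 {x : ℝ} (hx : 0 ≤ x) : HasDerivAt omegaFn (x / (1 + x)) x := by
  have h1 : 1 + x ≠ 0 := by positivity
  have h := (hasDerivAt_id x).sub (((hasDerivAt_id x).const_add 1).log h1)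
  refine HasDerivAt.congr_deriv (f := omegaFn) h ?_
  simp only [id]
  field_simp
  ring

/-- A second-order comparison principle: `φ'(0) = 0` and
`φ''(t) ≥ r² / (1 + M r t / 2)²` force `φ` to grow at least like `(4 / M²) ω(M r t / 2)`. -/
lemma omega_growth {φ φ' φ'' : ℝ → ℝ} {M r : ℝ} (hM : 0 < M) (hr : 0 ≤ r)
    (h1 : ∀ t, HasDerivAt φ (φ' t) t) (h2 : ∀ t, HasDerivAt φ' (φ'' t) t)
    (h0 : φ' 0 = 0) (hge : ∀ t, 0 ≤ t → r ^ 2 ≤ (1 + M * r * t / 2) ^ 2 * φ'' t) :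
    4 / M ^ 2 * omegaFn (M * r / 2) ≤ φ 1 - φ 0 := by
  have hpos : ∀ t : ℝ, 0 ≤ t → 0 < 1 + M * r * t / 2 := fun t ht => by positivity
  have hmono {g g' : ℝ → ℝ} (hd : ∀ t, 0 ≤ t → HasDerivAt g (g' t) t)
      (hn : ∀ t, 0 ≤ t → 0 ≤ g' t) : MonotoneOn g (Set.Ici 0) := by
    refine monotoneOn_of_hasDerivWithinAt_nonneg (f' := g') (convex_Ici 0)
      (fun t ht => (hd t ht).continuousAt.continuousWithinAt) (fun t ht => ?_) (fun t ht => ?_)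
    · exact (hd t (interior_subset ht)).hasDerivWithinAt
    · exact hn t (interior_subset ht)
  have hd1 : ∀ t, 0 ≤ t → HasDerivAt (fun t => φ' t - r ^ 2 * t / (1 + M * r * t / 2))
      (φ'' t - r ^ 2 / (1 + M * r * t / 2) ^ 2) t := by
    intro t ht
    have hp := (hpos t ht).ne'
    have hlin : HasDerivAt (fun t : ℝ => 1 + M * r * t / 2) (M * r / 2) t := by
      simpa using (((hasDerivAt_id t).const_mul (M * r)).div_const 2).const_add 1
    have hnum : HasDerivAt (fun t : ℝ => r ^ 2 * t) (r ^ 2) t := by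
      simpa using (hasDerivAt_id t).const_mul (r ^ 2)
    refine ((h2 t).sub (hnum.div hlin hp)).congr_deriv ?_
    congr 2
    ring
  have hm1 := hmono hd1 (fun t ht => by
    rw [sub_nonneg, div_le_iff₀ (pow_pos (hpos t ht) 2), mul_comm]
    exact hge t ht)
  have hd2 : ∀ t, 0 ≤ t → HasDerivAt (fun t => φ t - 4 / M ^ 2 * omegaFn (M * r * t / 2))
      (φ' t - r ^ 2 * t / (1 + M * r * t / 2)) t := by
    intro t ht
    have hp := (hpos t ht).ne'
    have hlin : HasDerivAt (fun t : ℝ => M * r * t / 2) (M * r / 2) t := by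
      simpa using ((hasDerivAt_id t).const_mul (M * r)).div_const 2
    have hω := (hasDerivAt_omegaFn_s14 (x := M * r * t / 2) (by positivity)).comp t hlin
    refine ((h1 t).sub (hω.const_mul (4 / M ^ 2))).congr_deriv ?_
    congr 1
    field_simp
    ring
  have hm2 := hmono hd2 (fun t ht => by
    have h := hm1 (Set.mem_Ici.2 le_rfl) (Set.mem_Ici.2 ht) ht
    simpa [h0] using h)
  have h := hm2 (Set.mem_Ici.2 le_rfl) (Set.mem_Ici.2 zero_le_one) zero_le_one
  have hω0 : omegaFn 0 = 0 := by simp [omegaFn]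
  simp only [mul_zero, zero_div, hω0, mul_one, sub_zero] at h
  linarith

/-- A bound on the local norm at `y` of the displacement `w - y` makes the Hessians at `w` and `y`
comparable in both directions. -/
lemma hessian_le_of_local_norm_le {d : ℕ} {hess : (Fin d → ℝ) → Matrix (Fin d) (Fin d) ℝ} {M : ℝ}
    (hpd : ∀ x, (hess x).PosDef) (hssc : StronglySelfConcordant hess M)
    {w y : Fin d → ℝ} {D : ℝ} (hD : M * √((w - y) ⬝ᵥ (hess y *ᵥ (w - y))) ≤ D) :
    loewnerLE (hess y) ((1 + D) • hess w) ∧ loewnerLE (hess w) ((1 + D) • hess y) := by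
  have key : ∀ {a b : Fin d → ℝ} {s : ℝ}, s ≤ D →
      loewnerLE (hess a - hess b) (s • hess b) → loewnerLE (hess a) ((1 + D) • hess b) := by
    intro a b s hs h
    have h2 := h.add ((hpd b).posSemidef.smul (sub_nonneg.2 hs))
    unfold loewnerLE
    convert h2 using 1
    module
  refine ⟨key ?_ (hssc y w y), key hD (hssc w y y)⟩
  have hsymm : (y - w) ⬝ᵥ (hess y *ᵥ (y - w)) = (w - y) ⬝ᵥ (hess y *ᵥ (w - y)) := by
    rw [← neg_sub w y, mulVec_neg, neg_dotProduct_neg]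
  rw [hsymm]
  exact hD

lemma loewnerLE.dotProduct_le {d : ℕ} {A B : Matrix (Fin d) (Fin d) ℝ} (h : loewnerLE A B)
    (v : Fin d → ℝ) : v ⬝ᵥ (A *ᵥ v) ≤ v ⬝ᵥ (B *ᵥ v) := by
  have h1 := h.dotProduct_mulVec_nonneg v
  rw [sub_mulVec, dotProduct_sub] at h1
  simpa using h1

/-- The quadratic form of a positive semidefinite matrix is quasiconvex. -/
lemma quadForm_segment_le {d : ℕ} {A : Matrix (Fin d) (Fin d) ℝ} (hA : A.PosSemidef)
    {a b : Fin d → ℝ} {R τ : ℝ} (ha : a ⬝ᵥ (A *ᵥ a) ≤ R) (hb : b ⬝ᵥ (A *ᵥ b) ≤ R)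
    (hτ : τ ∈ Set.Icc (0:ℝ) 1) :
    (a + τ • (b - a)) ⬝ᵥ (A *ᵥ (a + τ • (b - a))) ≤ R := by
  have h := hA.dotProduct_mulVec_nonneg (b - a)
  simp only [star_trivial] at h
  obtain ⟨h0, h1⟩ := hτ
  simp only [mulVec_add, mulVec_smul, mulVec_sub, dotProduct_add, add_dotProduct, smul_dotProduct,
    dotProduct_smul, sub_dotProduct, dotProduct_sub, smul_eq_mul] at h ⊢
  -- `q(a + τ(b - a)) = (1 - τ) q(a) + τ q(b) - τ (1 - τ) q(b - a)`.
  nlinarith [mul_nonneg (mul_nonneg h0 (sub_nonneg.2 h1)) h,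
    mul_le_mul_of_nonneg_left ha (sub_nonneg.2 h1), mul_le_mul_of_nonneg_left hb h0]

/-- The self-concordant growth bound `(4 / M²) ω(M ‖w - x_*‖_{x_*} / 2) ≤ f(w) - f(x_*)`. -/
lemma omega_le_gap {d : ℕ} {f : (Fin d → ℝ) → ℝ} {grad : (Fin d → ℝ) → (Fin d → ℝ)}
    {hess : (Fin d → ℝ) → Matrix (Fin d) (Fin d) ℝ} (hf : ContDiff ℝ 2 f)
    (hgrad : ∀ x v, fderiv ℝ f x v = grad x ⬝ᵥ v)
    (hhess : ∀ x v, fderiv ℝ grad x v = hess x *ᵥ v)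
    (hpd : ∀ x, (hess x).PosDef) {M : ℝ} (hM : 0 < M) (hssc : StronglySelfConcordant hess M)
    {xstar : Fin d → ℝ} (hmin : ∀ y, f xstar ≤ f y) (w : Fin d → ℝ) :
    4 / M ^ 2 * omegaFn (M * √((w - xstar) ⬝ᵥ (hess xstar *ᵥ (w - xstar))) / 2)
      ≤ f w - f xstar := by
  set v := w - xstar with hv
  set q := v ⬝ᵥ (hess xstar *ᵥ v) with hq
  have hq0 : 0 ≤ q := by simpa using (hpd xstar).posSemidef.dotProduct_mulVec_nonneg v
  have hgd : Differentiable ℝ grad := by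
    have hfd : Differentiable ℝ (fderiv ℝ f) :=
      (hf.fderiv_right (m := 1) (by norm_num)).differentiable (by norm_num)
    have hcoord : grad = fun x i => fderiv ℝ f x (Pi.single i 1) := by
      funext x i
      rw [hgrad, dotProduct_single, mul_one]
    rw [hcoord]
    fun_prop
  have hline : ∀ t : ℝ, HasDerivAt (fun t : ℝ => xstar + t • v) v t := fun t => by
    simpa using ((hasDerivAt_id t).smul_const v).const_add xstar
  have h1 : ∀ t : ℝ, HasDerivAt (fun t : ℝ => f (xstar + t • v))
      (v ⬝ᵥ grad (xstar + t • v)) t := fun t => by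
    have h := ((hf.differentiable (by norm_num)) (xstar + t • v)).hasFDerivAt.comp_hasDerivAt t
      (hline t)
    rw [hgrad, dotProduct_comm] at h
    exact h
  have h2 : ∀ t : ℝ, HasDerivAt (fun t : ℝ => v ⬝ᵥ grad (xstar + t • v))
      (v ⬝ᵥ (hess (xstar + t • v) *ᵥ v)) t := fun t => by
    have h := (hgd (xstar + t • v)).hasFDerivAt.comp_hasDerivAt t (hline t)
    rw [hhess] at h
    exact HasDerivAt.fun_sum fun i _ => ((hasDerivAt_pi.1 h) i).const_mul (v i)
  have h0 : v ⬝ᵥ grad (xstar + (0:ℝ) • v) = 0 := by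
    have h : fderiv ℝ f xstar = 0 :=
      IsLocalMin.fderiv_eq_zero (Filter.Eventually.of_forall hmin)
    rw [zero_smul, add_zero, dotProduct_comm, ← hgrad, h]
    rfl
  have hge : ∀ t : ℝ, 0 ≤ t →
      √q ^ 2 ≤ (1 + M * √q * t / 2) ^ 2 * (v ⬝ᵥ (hess (xstar + t • v) *ᵥ v)) := by
    intro t ht
    have hnorm : M * √((xstar + t • v - xstar) ⬝ᵥ
        (hess xstar *ᵥ (xstar + t • v - xstar))) ≤ M * √q * t := by
      rw [add_sub_cancel_left, mulVec_smul, smul_dotProduct, dotProduct_smul, smul_eq_mul,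
        smul_eq_mul, ← hq, show t * (t * q) = q * t ^ 2 by ring, Real.sqrt_mul hq0,
        Real.sqrt_sq ht, mul_assoc]
    have h := (hessian_le_of_local_norm_le hpd hssc hnorm).1.dotProduct_le v
    rw [smul_mulVec, dotProduct_smul, smul_eq_mul, ← hq] at h
    have hn : 0 ≤ v ⬝ᵥ (hess (xstar + t • v) *ᵥ v) := by
      simpa using (hpd (xstar + t • v)).posSemidef.dotProduct_mulVec_nonneg v
    rw [Real.sq_sqrt hq0]
    refine h.trans (mul_le_mul_of_nonneg_right ?_ hn)
    nlinarith [sq_nonneg (M * √q * t)]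
  have h := omega_growth hM (Real.sqrt_nonneg q) h1 h2 h0 hge
  simpa [hv] using h

/-- Hessian comparison along a descent segment (Lemma 4(d)). -/
theorem hessian_comparison_descent_segment {d : ℕ}
    (f : (Fin d → ℝ) → ℝ)
    (grad : (Fin d → ℝ) → (Fin d → ℝ))
    (hess : (Fin d → ℝ) → Matrix (Fin d) (Fin d) ℝ)
    (hf : ContDiff ℝ 2 f)
    (hgrad : ∀ x v, fderiv ℝ f x v = grad x ⬝ᵥ v)
    (hhess : ∀ x v, fderiv ℝ grad x v = hess x *ᵥ v)
    (hpd : ∀ x, (hess x).PosDef)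
    (M : ℝ) (hM : 0 < M)
    (hssc : StronglySelfConcordant hess M)
    (xstar : Fin d → ℝ) (hmin : ∀ y, f xstar ≤ f y)
    (x : Fin d → ℝ) (C D : ℝ) (hCdef : C = f x - f xstar)
    (hDdef : 0 ≤ D ∧ omegaFn (D / 2) = M ^ 2 * C / 4)
    (x' : Fin d → ℝ) (hdesc : f x' ≤ f x)
    (τ : ℝ) (hτ : τ ∈ Set.Icc (0:ℝ) 1) :
    loewnerLE ((1 + D)⁻¹ • hess xstar) (hess (x + τ • (x' - x))) ∧
    loewnerLE (hess (x + τ • (x' - x))) ((1 + D) • hess xstar) := by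
  obtain ⟨hD0, hD⟩ := hDdef
  have hend : ∀ w, f w ≤ f x →
      (w - xstar) ⬝ᵥ (hess xstar *ᵥ (w - xstar)) ≤ (D / M) ^ 2 := by
    intro w hw
    have h := omega_le_gap hf hgrad hhess hpd hM hssc hmin w
    have h' : omegaFn (M * √((w - xstar) ⬝ᵥ (hess xstar *ᵥ (w - xstar))) / 2)
        ≤ omegaFn (D / 2) := by
      rw [hD, hCdef]
      rw [div_mul_eq_mul_div, div_le_iff₀ (by positivity)] at h
      nlinarith [mul_le_mul_of_nonneg_left hw (sq_nonneg M)]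
    rw [omegaFn_strictMonoOn.le_iff_le (Set.mem_Ici.2 (by positivity))
      (Set.mem_Ici.2 (by positivity))] at h'
    rw [← Real.sqrt_le_left (by positivity), le_div_iff₀ hM]
    linarith
  have hseg := quadForm_segment_le (hpd xstar).posSemidef (hend x le_rfl) (hend x' hdesc) hτ
  rw [show x - xstar + τ • (x' - xstar - (x - xstar)) = x + τ • (x' - x) - xstar by module,
    ← Real.sqrt_le_left (by positivity), le_div_iff₀ hM, mul_comm] at hseg
  obtain ⟨hlow, hup⟩ := hessian_le_of_local_norm_le hpd hssc hseg
  refine ⟨?_, hup⟩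
  have h1D : 0 < 1 + D := by linarith
  have h := Matrix.PosSemidef.smul hlow (inv_nonneg.2 h1D.le)
  rwa [smul_sub, inv_smul_smul₀ h1D.ne'] at h
end
end

section
/- Let f satisfy the stated assumptions, let x ∈ ℝ^d, set g := ∇f(x), C := f(x) − f(x_*), and D := 2ω⁻¹(M²C/4) (with D := 0 if C = 0). Then gᵀ∇²f(x_*)⁻¹g ≥ (f(x) − f(x_*))/(1 + D). -/
/-!
Write `u = x − x_*`, `H = ∇²f(x_*)`, `r = ‖u‖_{x_*}`, and restrict `f` to the segment:
`ψ(t) = f(x_* + t u)`, so that `ψ'(0) = 0`. Strong self-concordance, applied with `z = x_*` to the pair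
`(x_*, x_* + t u)`, gives `r² ≤ (1 + M r t) ψ''(t)` on `[0, 1]`. Three consequences:

* `C = ψ(1) − ψ(0) ≤ ψ'(1)`, by convexity (`value_gap_le_slope`);
* `r² ≤ (1 + M r) ψ'(1)`, by integrating once (`sq_le_mul_slope`);
* `4 ω(M r / 2) ≤ M² C`, by integrating twice, since `1 / (1 + a t) ≥ 1 / (1 + a t / 2)²`
  (`omegaFn_le_value_gap`); as `ω` is strictly increasing this says `M r ≤ D`.

Now `p = ψ'(1) = gᵀu`, so `C ≤ p` and `r² ≤ (1 + D) p`. Positivity of `H` at `H⁻¹g − s u` gives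
`gᵀH⁻¹g ≥ 2 s p − s² r²` for every `s` (`quadratic_le_dotProduct_inv`), and `s = 1 / (1 + D)` makes the
right-hand side at least `s p ≥ C / (1 + D)`.
-/

open Matrix Real Finset

noncomputable section

lemma le_of_hasDerivAt_nonneg_s15 {k k' : ℝ → ℝ} (h : ∀ t ∈ Set.Icc (0 : ℝ) 1, HasDerivAt k (k' t) t)
    (h0 : ∀ t ∈ Set.Icc (0 : ℝ) 1, 0 ≤ k' t) {t : ℝ} (ht : t ∈ Set.Icc (0 : ℝ) 1) : k 0 ≤ k t := by
  have hm : MonotoneOn k (Set.Icc 0 1) := by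
    refine monotoneOn_of_deriv_nonneg (convex_Icc 0 1)
      (fun s hs => (h s hs).continuousAt.continuousWithinAt)
      (fun s hs => (h s (interior_subset hs)).differentiableAt.differentiableWithinAt) ?_
    intro s hs
    rw [(h s (interior_subset hs)).deriv]
    exact h0 s (interior_subset hs)
  exact hm ⟨le_rfl, zero_le_one⟩ ht ht.1

lemma value_gap_le_slope {p p' p'' : ℝ → ℝ} (h1 : ∀ t, HasDerivAt p (p' t) t)
    (h2 : ∀ t, HasDerivAt p' (p'' t) t) (hnn : ∀ t, 0 ≤ p'' t) : p 1 - p 0 ≤ p' 1 := by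
  have h := le_of_hasDerivAt_nonneg_s15 (k := fun t => t * p' t - p t) (k' := fun t => t * p'' t)
    (fun t _ => by
      have := ((hasDerivAt_id t).mul (h2 t)).sub (h1 t)
      exact this.congr_deriv (by simp))
    (fun t ht => mul_nonneg ht.1 (hnn t)) (t := 1) ⟨zero_le_one, le_rfl⟩
  linarith

lemma sq_le_mul_slope {p' p'' : ℝ → ℝ} (h2 : ∀ t, HasDerivAt p' (p'' t) t) (h0 : p' 0 = 0)
    (hnn : ∀ t, 0 ≤ p'' t) {a r : ℝ} (ha : 0 ≤ a)
    (hlow : ∀ t ∈ Set.Icc (0 : ℝ) 1, r ^ 2 ≤ (1 + a * t) * p'' t) : r ^ 2 ≤ (1 + a) * p' 1 := by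
  have h := le_of_hasDerivAt_nonneg_s15 (k := fun t => (1 + a) * p' t - r ^ 2 * t)
    (k' := fun t => (1 + a) * p'' t - r ^ 2)
    (fun t _ => by
      have := ((h2 t).const_mul (1 + a)).sub ((hasDerivAt_id t).const_mul (r ^ 2))
      exact this.congr_deriv (by simp))
    (fun t ht => by
      have h3 := hlow t ht
      have h4 : a * t * p'' t ≤ a * p'' t :=
        mul_le_mul_of_nonneg_right (mul_le_of_le_one_right ha ht.2) (hnn t)
      linarith) (t := 1) ⟨zero_le_one, le_rfl⟩
  simp only [h0] at h
  linarith

/-- Compares `M² p(t)` with `4 ω(a t / 2)`, `a = M r`, through their first and second derivatives. -/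
lemma omegaFn_le_value_gap {p p' p'' : ℝ → ℝ} (h1 : ∀ t, HasDerivAt p (p' t) t)
    (h2 : ∀ t, HasDerivAt p' (p'' t) t) (h0 : p' 0 = 0) (hnn : ∀ t, 0 ≤ p'' t) {M r : ℝ}
    (ha : 0 ≤ M * r)
    (hlow : ∀ t ∈ Set.Icc (0 : ℝ) 1, r ^ 2 ≤ (1 + M * r * t) * p'' t) :
    4 * omegaFn (M * r / 2) ≤ M ^ 2 * (p 1 - p 0) := by
  set a := M * r with hadef
  have hpos : ∀ t ∈ Set.Icc (0 : ℝ) 1, 0 < 1 + a / 2 * t := fun t ht => by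
    have := mul_nonneg ha ht.1
    linarith
  have hlin : ∀ t : ℝ, HasDerivAt (fun t => 1 + a / 2 * t) (a / 2) t := fun t => by
    simpa using ((hasDerivAt_id t).const_mul (a / 2)).const_add 1
  have hslope : ∀ t ∈ Set.Icc (0 : ℝ) 1,
      0 ≤ M ^ 2 * p' t - 4 * (a / 2 - a / 2 / (1 + a / 2 * t)) := by
    intro t ht
    have h := le_of_hasDerivAt_nonneg_s15
      (k := fun t => M ^ 2 * p' t - 4 * (a / 2 - a / 2 / (1 + a / 2 * t)))
      (k' := fun t => M ^ 2 * p'' t - a ^ 2 / (1 + a / 2 * t) ^ 2)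
      (fun s hs => by
        have := ((h2 s).const_mul (M ^ 2)).sub
          ((((hasDerivAt_const s (a / 2)).div (hlin s) (hpos s hs).ne').const_sub (a / 2)).const_mul 4)
        exact this.congr_deriv (by ring))
      (fun s hs => by
        have hq := hpos s hs
        rw [sub_nonneg, div_le_iff₀ (by positivity)]
        have h3 := mul_le_mul_of_nonneg_left (hlow s hs) (sq_nonneg M)
        have h4 : 0 ≤ M ^ 2 * p'' s * (a / 2 * s) ^ 2 :=
          mul_nonneg (mul_nonneg (sq_nonneg M) (hnn s)) (sq_nonneg _)
        have h5 : a ^ 2 = M ^ 2 * r ^ 2 := by rw [hadef]; ring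
        rw [h5]
        nlinarith [h3, h4]) ht
    simpa [h0] using h
  have h := le_of_hasDerivAt_nonneg_s15
    (k := fun t => M ^ 2 * p t - 4 * (1 + a / 2 * t - Real.log (1 + a / 2 * t)))
    (k' := fun t => M ^ 2 * p' t - 4 * (a / 2 - a / 2 / (1 + a / 2 * t)))
    (fun s hs => ((h1 s).const_mul (M ^ 2)).sub
      (((hlin s).sub ((hlin s).log (hpos s hs).ne')).const_mul 4))
    hslope (t := 1) ⟨zero_le_one, le_rfl⟩
  simp only [mul_zero, add_zero, Real.log_one, mul_one] at h
  unfold omegaFn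
  linarith

/-- `ω` reflects the order on `[0, ∞)`: by `log z < z − 1` at `z = (1+x)/(1+y)`, it is strictly
increasing there. -/
lemma le_of_omegaFn_le {x y : ℝ} (hy : 0 ≤ y) (h : omegaFn x ≤ omegaFn y) : x ≤ y := by
  by_contra! hlt
  have hy1 : 0 < 1 + y := by linarith
  have hx1 : 0 < 1 + x := by linarith
  have h1 : Real.log ((1 + x) / (1 + y)) < (1 + x) / (1 + y) - 1 :=
    Real.log_lt_sub_one_of_pos (by positivity) (by
      intro h2
      rw [div_eq_one_iff_eq hy1.ne'] at h2
      linarith)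
  rw [Real.log_div hx1.ne' hy1.ne'] at h1
  have h2 : (1 + x) / (1 + y) - 1 ≤ x - y := by
    rw [div_sub_one hy1.ne', div_le_iff₀ hy1]
    nlinarith
  unfold omegaFn at h
  linarith

/-- Cauchy–Schwarz in the norm of `H`, in a form that needs no division by `uᵀHu`: the supremum of the
left-hand side over `s` is `(gᵀu)² / (uᵀHu)` when `u ≠ 0`. -/
lemma quadratic_le_dotProduct_inv {d : ℕ} {H : Matrix (Fin d) (Fin d) ℝ} (hH : H.PosDef)
    (g u : Fin d → ℝ) (s : ℝ) :
    2 * s * (g ⬝ᵥ u) - s ^ 2 * (u ⬝ᵥ (H *ᵥ u)) ≤ g ⬝ᵥ (H⁻¹ *ᵥ g) := by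
  set w := H⁻¹ *ᵥ g with hw
  have hHw : H *ᵥ w = g := by
    rw [hw, mulVec_mulVec, Matrix.mul_nonsing_inv _ ((Matrix.isUnit_iff_isUnit_det _).1 hH.isUnit),
      one_mulVec]
  have hsymm : w ⬝ᵥ (H *ᵥ u) = g ⬝ᵥ u := by
    have hT : Hᵀ = H := by simpa [Matrix.IsHermitian] using hH.1
    rw [dotProduct_mulVec, ← mulVec_transpose, hT, hHw]
  have h := hH.posSemidef.dotProduct_mulVec_nonneg (w - s • u)
  simp only [star_trivial, mulVec_sub, mulVec_smul, hHw, dotProduct_sub, sub_dotProduct,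
    smul_dotProduct, dotProduct_smul, smul_eq_mul, hsymm] at h
  rw [dotProduct_comm w g, dotProduct_comm u g] at h
  linarith

/-- Lower bound on the weighted gradient norm (Lemma 5). -/
theorem gradient_norm_lower_bound {d : ℕ}
    (f : (Fin d → ℝ) → ℝ)
    (grad : (Fin d → ℝ) → (Fin d → ℝ))
    (hess : (Fin d → ℝ) → Matrix (Fin d) (Fin d) ℝ)
    (hf : ContDiff ℝ 2 f)
    (hgrad : ∀ x v, fderiv ℝ f x v = grad x ⬝ᵥ v)
    (hhess : ∀ x v, fderiv ℝ grad x v = hess x *ᵥ v)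
    (hpd : ∀ x, (hess x).PosDef)
    (M : ℝ) (hM : 0 < M)
    (hssc : StronglySelfConcordant hess M)
    (xstar : Fin d → ℝ) (hmin : ∀ y, f xstar ≤ f y)
    (x : Fin d → ℝ) (C D : ℝ) (hCdef : C = f x - f xstar)
    (hDdef : 0 ≤ D ∧ omegaFn (D / 2) = M ^ 2 * C / 4)
 :
    grad x ⬝ᵥ ((hess xstar)⁻¹ *ᵥ grad x) ≥ (f x - f xstar) / (1 + D) := by
  obtain ⟨hD0, hDω⟩ := hDdef
  set u := x - xstar with hu
  have hfd : Differentiable ℝ f := hf.differentiable (by norm_num)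
  have hgd : Differentiable ℝ grad := by
    have h1 : Differentiable ℝ (fderiv ℝ f) :=
      (hf.fderiv_right (m := 1) (by norm_num)).differentiable (by norm_num)
    have h2 : grad = fun y i => fderiv ℝ f y (Pi.single i 1) := by
      funext y i
      rw [hgrad]
      simp
    rw [h2]
    fun_prop
  have hline : ∀ t : ℝ, HasDerivAt (fun t : ℝ => xstar + t • u) u t := fun t => by
    simpa using ((hasDerivAt_id t).smul_const u).const_add xstar
  have h1 : ∀ t : ℝ, HasDerivAt (fun t : ℝ => f (xstar + t • u)) (grad (xstar + t • u) ⬝ᵥ u) t :=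
    fun t => by
      have := (hfd (xstar + t • u)).hasFDerivAt.comp_hasDerivAt t (hline t)
      rwa [hgrad] at this
  have h2 : ∀ t : ℝ, HasDerivAt (fun t : ℝ => grad (xstar + t • u) ⬝ᵥ u)
      (u ⬝ᵥ (hess (xstar + t • u) *ᵥ u)) t := fun t => by
    have h3 := (hgd (xstar + t • u)).hasFDerivAt.comp_hasDerivAt t (hline t)
    rw [hhess, hasDerivAt_pi] at h3
    rw [dotProduct_comm u]
    exact HasDerivAt.fun_sum fun i _ => (h3 i).mul_const (u i)
  have h0 : grad (xstar + (0 : ℝ) • u) ⬝ᵥ u = 0 := by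
    have hmin' : IsLocalMin f xstar := Filter.Eventually.of_forall hmin
    rw [← hgrad, zero_smul, add_zero, hmin'.fderiv_eq_zero]
    rfl
  have hnn : ∀ t : ℝ, 0 ≤ u ⬝ᵥ (hess (xstar + t • u) *ᵥ u) := fun t => by
    simpa using (hpd (xstar + t • u)).posSemidef.dotProduct_mulVec_nonneg u
  have hq : 0 ≤ u ⬝ᵥ (hess xstar *ᵥ u) := by simpa using hnn 0
  set r := Real.sqrt (u ⬝ᵥ (hess xstar *ᵥ u)) with hr
  have hr2 : r ^ 2 = u ⬝ᵥ (hess xstar *ᵥ u) := Real.sq_sqrt hq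
  have hr0 : 0 ≤ r := Real.sqrt_nonneg _
  have ha : 0 ≤ M * r := by positivity
  have hlow : ∀ t ∈ Set.Icc (0 : ℝ) 1,
      r ^ 2 ≤ (1 + M * r * t) * (u ⬝ᵥ (hess (xstar + t • u) *ᵥ u)) := by
    intro t ht
    have h3 := (hssc xstar (xstar + t • u) xstar).dotProduct_mulVec_nonneg u
    have h4 : xstar - (xstar + t • u) = -(t • u) := by abel
    have h5 : Real.sqrt ((-(t • u)) ⬝ᵥ (hess xstar *ᵥ (-(t • u)))) = t * r := by
      have : (-(t • u)) ⬝ᵥ (hess xstar *ᵥ (-(t • u))) = (t * r) ^ 2 := by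
        simp only [mulVec_neg, neg_dotProduct_neg, mulVec_smul, smul_dotProduct, dotProduct_smul,
          smul_eq_mul]
        rw [← hr2]
        ring
      rw [this, Real.sqrt_sq (mul_nonneg ht.1 hr0)]
    rw [h4, h5] at h3
    simp only [star_trivial, sub_mulVec, smul_mulVec, dotProduct_sub, dotProduct_smul,
      smul_eq_mul] at h3
    rw [hr2]
    linarith
  have hx : xstar + (1 : ℝ) • u = x := by rw [hu]; simp
  have hA := value_gap_le_slope h1 h2 hnn
  have hB := sq_le_mul_slope h2 h0 hnn ha hlow
  have hω := omegaFn_le_value_gap h1 h2 h0 hnn ha hlow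
  simp only [hx, zero_smul, add_zero] at hA hB hω
  have hC0 : 0 ≤ f x - f xstar := sub_nonneg.2 (hmin x)
  have hrD : M * r ≤ D := by
    have h3 : M * r / 2 ≤ D / 2 := by
      refine le_of_omegaFn_le (by linarith) ?_
      rw [hDω, hCdef]
      linarith
    linarith
  have hG0 : 0 ≤ grad x ⬝ᵥ u := hC0.trans hA
  have hB' : r ^ 2 ≤ (1 + D) * (grad x ⬝ᵥ u) :=
    hB.trans (mul_le_mul_of_nonneg_right (by linarith) hG0)
  -- `s = 1 / (1 + D)` suffices: `2 s p - s² r² ≥ s p ≥ s C` for `p = gᵀu`, without dividing by `r²`.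
  have hCS := quadratic_le_dotProduct_inv (hpd xstar) (grad x) u (1 / (1 + D))
  rw [← hr2] at hCS
  refine le_trans ?_ hCS
  have hD1 : 0 < 1 + D := by linarith
  have h3 : (1 / (1 + D)) ^ 2 * r ^ 2 ≤ 1 / (1 + D) * (grad x ⬝ᵥ u) := by
    refine (mul_le_mul_of_nonneg_left hB' (by positivity)).trans (le_of_eq ?_)
    field_simp
  have h4 : (f x - f xstar) / (1 + D) ≤ 1 / (1 + D) * (grad x ⬝ᵥ u) := by
    rw [div_eq_mul_one_div, mul_comm]
    exact mul_le_mul_of_nonneg_left hA (by positivity)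
  linarith
end
end

section
/- Let f satisfy the stated assumptions, let x ∈ ℝ^d with f(x) > f(x_*), set g := ∇f(x), C := f(x) − f(x_*), and D := 2ω⁻¹(M²C/4). Then 2/(1+D)² ≤ (gᵀ∇²f(x_*)⁻¹g)/(f(x) − f(x_*)) ≤ 2(1+D)². -/
/-!
Write `h = x - xstar`, `H t = hess (xstar + t h)`, `φ t = hᵀ (H t) h` and `q = gᵀ (H 0)⁻¹ g`.

By the mean value theorem some point `z` of the segment satisfies `hᵀ (hess z) h = 2 C`. Strong
self-concordance measured at this `z` gives, with `b = M √(2C)`,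
`H t ⪯ (1 + b t) H 0` and `H 0 ⪯ (1 + b t) H t` for `t ∈ [0, 1]`.
Integrating along the segment (with the tangent-line bound for `1 / (1 + b t)`) compares both `C`
and `q` with `φ 0`:

* `φ 0 / (2 (1 + b/3)) ≤ C ≤ (1 + b/3) φ 0 / 2`,
* `φ 0 / (1 + b/2)² ≤ q ≤ (1 + b/2)² φ 0`.

So the ratio `q / C` lies between `2 / R` and `2 R` with `R = (1 + b/2)² (1 + b/3)`. Finally
`b² = 2 M² C = 8 ω(D/2)`, and `ω(s) ≤ min (s, s²/2)` yields `b ≤ D` and `b² ≤ 4 D`, which imply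
`R ≤ (1 + D)²`. Integrals are replaced throughout by comparison of derivatives.
-/

open Matrix Real Finset

noncomputable section

/-! ### Comparison of derivatives and scalar inequalities -/

/-- Comparison of increments on `[0, 1]` from comparison of derivatives. -/
lemma increment_le {P p G g : ℝ → ℝ} (hP : ∀ t, HasDerivAt P (p t) t)
    (hG : ∀ t, HasDerivAt G (g t) t) (hle : ∀ t, 0 ≤ t → t ≤ 1 → p t ≤ g t)
    {t : ℝ} (h0 : 0 ≤ t) (h1 : t ≤ 1) : P t - P 0 ≤ G t - G 0 := by
  have hd : ∀ s, HasDerivAt (fun s => G s - P s) (g s - p s) s := fun s => (hG s).sub (hP s)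
  have hmono : MonotoneOn (fun s => G s - P s) (Set.Icc 0 1) := by
    refine monotoneOn_of_deriv_nonneg (convex_Icc 0 1)
      (fun s _ => (hd s).continuousAt.continuousWithinAt)
      (fun s _ => (hd s).differentiableAt.differentiableWithinAt) ?_
    intro s hs
    rw [interior_Icc] at hs
    rw [(hd s).deriv]
    linarith [hle s hs.1.le hs.2.le]
  have := hmono (Set.left_mem_Icc.2 zero_le_one) ⟨h0, h1⟩ h0
  beta_reduce at this
  linarith

lemma hasDerivAt_quadratic (α β t : ℝ) :
    HasDerivAt (fun s : ℝ => α * s + β / 2 * s ^ 2) (α + β * t) t := by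
  have := ((hasDerivAt_id t).const_mul α).add (((hasDerivAt_id t).pow 2).const_mul (β / 2))
  refine this.congr_deriv ?_
  norm_num
  ring

lemma hasDerivAt_cubic (α β t : ℝ) :
    HasDerivAt (fun s : ℝ => α / 2 * s ^ 2 + β / 6 * s ^ 3) (α * t + β / 2 * t ^ 2) t := by
  have := (((hasDerivAt_id t).pow 2).const_mul (α / 2)).add
    (((hasDerivAt_id t).pow 3).const_mul (β / 6))
  refine this.congr_deriv ?_
  norm_num
  ring

/-- `1 / (1 + x)` lies above its tangent line at `m`. -/
lemma tangent_le {a v m x : ℝ} (hm : 0 ≤ m) (hx : 0 ≤ x) (ha : 0 ≤ a) (hav : a ≤ (1 + x) * v) :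
    a * (1 / (1 + m) + m / (1 + m) ^ 2) + -(a / (1 + m) ^ 2) * x ≤ v := by
  have h1 : a / (1 + x) ≤ v := by
    rw [div_le_iff₀ (by linarith)]
    linarith
  refine le_trans ?_ h1
  have h2 : a / (1 + x) - (a * (1 / (1 + m) + m / (1 + m) ^ 2) + -(a / (1 + m) ^ 2) * x)
      = a * (x - m) ^ 2 / ((1 + x) * (1 + m) ^ 2) := by
    field_simp
    ring
  have h3 : 0 ≤ a * (x - m) ^ 2 / ((1 + x) * (1 + m) ^ 2) := by positivity
  linarith

lemma omegaFn_le_self {s : ℝ} (hs : 0 ≤ s) : omegaFn s ≤ s := by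
  have := Real.log_nonneg (by linarith : (1 : ℝ) ≤ 1 + s)
  unfold omegaFn
  linarith

lemma omegaFn_le_sq {s : ℝ} (hs : 0 ≤ s) : omegaFn s ≤ s ^ 2 / 2 := by
  have h1 := Real.le_log_one_add_of_nonneg hs
  have h2 : s - s ^ 2 / 2 ≤ 2 * s / (s + 2) := by
    rw [le_div_iff₀ (by linarith)]
    nlinarith [pow_nonneg hs 3]
  unfold omegaFn
  linarith

lemma factor_le {b D : ℝ} (hb : 0 ≤ b) (hbD : b ≤ D) (hb2 : b ^ 2 ≤ 4 * D) :
    (1 + b / 2) ^ 2 * (1 + b / 3) ≤ (1 + D) ^ 2 := by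
  nlinarith [mul_le_mul_of_nonneg_left hb2 hb, mul_le_mul_of_nonneg_left hbD (hb.trans hbD),
    mul_le_mul hbD hbD hb (hb.trans hbD)]

/-! ### Quadratic forms -/

/-- Expansion of the nonnegative quadratic form at `v - c • u`. -/
lemma quad_expand {d : ℕ} {A : Matrix (Fin d) (Fin d) ℝ} (hA : A.PosDef) (u v : Fin d → ℝ)
    (c : ℝ) : 2 * c * (u ⬝ᵥ (A *ᵥ v)) ≤ v ⬝ᵥ (A *ᵥ v) + c ^ 2 * (u ⬝ᵥ (A *ᵥ u)) := by
  have h0 := hA.posSemidef.dotProduct_mulVec_nonneg (v - c • u)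
  have hT : Aᵀ = A := by simpa using hA.isHermitian.eq
  have hsymm : v ⬝ᵥ (A *ᵥ u) = u ⬝ᵥ (A *ᵥ v) := by
    rw [dotProduct_mulVec, ← mulVec_transpose, hT, dotProduct_comm]
  simp only [star_trivial, mulVec_sub, mulVec_smul, dotProduct_sub, sub_dotProduct,
    smul_dotProduct, dotProduct_smul, smul_eq_mul] at h0
  rw [hsymm] at h0
  linarith

lemma loewnerLE.quad_le {d : ℕ} {A B : Matrix (Fin d) (Fin d) ℝ} {c : ℝ}
    (h : loewnerLE (A - B) (c • B)) (v : Fin d → ℝ) :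
    v ⬝ᵥ (A *ᵥ v) ≤ (1 + c) * (v ⬝ᵥ (B *ᵥ v)) := by
  have h0 := Matrix.PosSemidef.dotProduct_mulVec_nonneg h v
  simp only [star_trivial, sub_mulVec, smul_mulVec, dotProduct_sub, dotProduct_smul,
    smul_eq_mul] at h0
  linarith

/-! ### One-dimensional argument along the segment -/

/-- The conclusion for abstract data along the segment: `φ` is the second derivative of `F`, and
`ψ` the derivative of `t ↦ uᵀ ∇f(xstar + t h)`, where `u = (H 0)⁻¹ g`. -/
lemma scalar_bounds {F G φ U ψ : ℝ → ℝ} {b q : ℝ} (hb : 0 ≤ b)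
    (hF : ∀ t, HasDerivAt F (G t) t) (hG : ∀ t, HasDerivAt G (φ t) t)
    (hU : ∀ t, HasDerivAt U (ψ t) t) (hG0 : G 0 = 0) (hU0 : U 0 = 0) (hU1 : U 1 = q)
    (hφ0 : 0 ≤ φ 0)
    (hup : ∀ t, 0 ≤ t → t ≤ 1 → φ t ≤ (1 + b * t) * φ 0)
    (hlo : ∀ t, 0 ≤ t → t ≤ 1 → φ 0 ≤ (1 + b * t) * φ t)
    (hψ : ∀ c t, 0 ≤ t → t ≤ 1 → 2 * c * ψ t ≤ (1 + b * t) * (φ 0 + c ^ 2 * q))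
    (hq : ∀ c, 2 * c * G 1 ≤ q + c ^ 2 * φ 0) :
    2 * (F 1 - F 0) ≤ (1 + b / 2) ^ 2 * (1 + b / 3) * q ∧
    q ≤ 2 * ((1 + b / 2) ^ 2 * (1 + b / 3)) * (F 1 - F 0) := by
  have hK : 0 < 1 + b / 2 := by linarith
  have hL : 0 < 1 + b / 3 := by linarith
  have hCup : 2 * (F 1 - F 0) ≤ (1 + b / 3) * φ 0 := by
    have h := increment_le hF (hasDerivAt_cubic (φ 0) (φ 0 * b)) (fun t h0 h1 => by
      have := increment_le hG (hasDerivAt_quadratic (φ 0) (φ 0 * b))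
        (fun t h0 h1 => by linarith [hup t h0 h1]) h0 h1
      simp only [hG0] at this
      linarith) zero_le_one le_rfl
    beta_reduce at h
    linarith
  have hClo : φ 0 ≤ 2 * (1 + b / 3) * (F 1 - F 0) := by
    set α := φ 0 * (1 / (1 + b / 3) + b / 3 / (1 + b / 3) ^ 2) with hα
    set β := -(φ 0 / (1 + b / 3) ^ 2) * b with hβ
    have h := increment_le (hasDerivAt_cubic α β) hF (fun t h0 h1 => by
      have := increment_le (hasDerivAt_quadratic α β) hG
        (fun t h0 h1 => by
          have := tangent_le (by positivity : 0 ≤ b / 3) (by positivity : 0 ≤ b * t) hφ0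
            (hlo t h0 h1)
          rw [hα, hβ]; linarith) h0 h1
      simp only [hG0] at this
      linarith) zero_le_one le_rfl
    beta_reduce at h
    have hv : α / 2 + β / 6 = φ 0 / (2 * (1 + b / 3)) := by
      rw [hα, hβ]; field_simp; ring
    have : φ 0 / (2 * (1 + b / 3)) ≤ F 1 - F 0 := by linarith
    rw [div_le_iff₀ (by positivity)] at this
    linarith
  have hGlo : φ 0 / (1 + b / 2) ≤ G 1 := by
    set α := φ 0 * (1 / (1 + b / 2) + b / 2 / (1 + b / 2) ^ 2) with hα
    set β := -(φ 0 / (1 + b / 2) ^ 2) * b with hβ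
    have h := increment_le (hasDerivAt_quadratic α β) hG
        (fun t h0 h1 => by
          have := tangent_le (by positivity : 0 ≤ b / 2) (by positivity : 0 ≤ b * t) hφ0
            (hlo t h0 h1)
          rw [hα, hβ]; linarith) zero_le_one le_rfl
    simp only [hG0] at h
    have hv : α + β / 2 = φ 0 / (1 + b / 2) := by
      rw [hα, hβ]; field_simp; ring
    linarith
  have hqlo : φ 0 ≤ (1 + b / 2) ^ 2 * q := by
    have h1 := hq (1 / (1 + b / 2))
    have h2 : 2 * (1 / (1 + b / 2)) * (φ 0 / (1 + b / 2)) ≤ 2 * (1 / (1 + b / 2)) * G 1 := by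
      gcongr
    have h3 : φ 0 / (1 + b / 2) ^ 2 ≤ q := by
      have e : 2 * (1 / (1 + b / 2)) * (φ 0 / (1 + b / 2)) - (1 / (1 + b / 2)) ^ 2 * φ 0
        = φ 0 / (1 + b / 2) ^ 2 := by field_simp; ring
      linarith
    rw [div_le_iff₀ (by positivity)] at h3
    linarith
  have hqup : q ≤ (1 + b / 2) ^ 2 * φ 0 := by
    set c := 1 / (1 + b / 2) with hc
    have h := increment_le (fun t => (hU t).const_mul (2 * c))
      (hasDerivAt_quadratic (φ 0 + c ^ 2 * q) ((φ 0 + c ^ 2 * q) * b))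
      (fun t h0 h1 => by linarith [hψ c t h0 h1]) zero_le_one le_rfl
    simp only [hU0, hU1] at h
    have hcK : c * (1 + b / 2) = 1 := by rw [hc]; field_simp
    -- multiply `2 c q ≤ (1 + b/2) (φ 0 + c² q)` by `1 + b/2 = 1 / c`
    have h2 : 2 * c * q ≤ (1 + b / 2) * (φ 0 + c ^ 2 * q) := by linarith
    have h3 := mul_le_mul_of_nonneg_left h2 hK.le
    have e1 : (1 + b / 2) * (2 * c * q) = 2 * q := by
      linear_combination 2 * q * hcK
    have e2 : (1 + b / 2) * ((1 + b / 2) * (φ 0 + c ^ 2 * q)) = (1 + b / 2) ^ 2 * φ 0 + q := by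
      linear_combination q * (c * (1 + b / 2) + 1) * hcK
    linarith
  constructor
  · have := mul_le_mul_of_nonneg_left hqlo hL.le
    linarith
  · have := mul_le_mul_of_nonneg_left hClo (sq_nonneg (1 + b / 2))
    linarith

/-- Second-order mean value theorem in Lagrange form, at a point where `F' = 0`. -/
lemma exists_second_deriv_eq {F G φ : ℝ → ℝ} (hF : ∀ t, HasDerivAt F (G t) t)
    (hG : ∀ t, HasDerivAt G (φ t) t) (hG0 : G 0 = 0) : ∃ s, φ s = 2 * (F 1 - F 0) := by
  obtain ⟨c, ⟨hc0, -⟩, hc⟩ := exists_ratio_hasDerivAt_eq_ratio_slope F G zero_lt_one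
    (fun t _ => (hF t).continuousAt.continuousWithinAt) (fun t _ => hF t)
    (fun t : ℝ => t ^ 2) (fun t => 2 * t) (by fun_prop)
    (fun t _ => by simpa using hasDerivAt_pow 2 t)
  obtain ⟨s, -, hs⟩ := exists_hasDerivAt_eq_slope G φ hc0
    (fun t _ => (hG t).continuousAt.continuousWithinAt) (fun t _ => hG t)
  refine ⟨s, ?_⟩
  rw [hs, hG0, sub_zero, sub_zero, div_eq_iff hc0.ne']
  norm_num at hc
  linarith

/-! ### The bound -/

/-- Two-sided bound on the weighted gradient norm (Lemma 6). -/
theorem gradient_norm_two_sided_bound {d : ℕ}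
    (f : (Fin d → ℝ) → ℝ)
    (grad : (Fin d → ℝ) → (Fin d → ℝ))
    (hess : (Fin d → ℝ) → Matrix (Fin d) (Fin d) ℝ)
    (hf : ContDiff ℝ 2 f)
    (hgrad : ∀ x v, fderiv ℝ f x v = grad x ⬝ᵥ v)
    (hhess : ∀ x v, fderiv ℝ grad x v = hess x *ᵥ v)
    (hpd : ∀ x, (hess x).PosDef)
    (M : ℝ) (hM : 0 < M)
    (hssc : StronglySelfConcordant hess M)
    (xstar : Fin d → ℝ) (hmin : ∀ y, f xstar ≤ f y)
    (x : Fin d → ℝ) (hfx : f xstar < f x)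
    (C D : ℝ) (hCdef : C = f x - f xstar)
    (hDdef : 0 ≤ D ∧ omegaFn (D / 2) = M ^ 2 * C / 4) :
    2 / (1 + D) ^ 2 ≤ (grad x ⬝ᵥ ((hess xstar)⁻¹ *ᵥ grad x)) / (f x - f xstar) ∧
    (grad x ⬝ᵥ ((hess xstar)⁻¹ *ᵥ grad x)) / (f x - f xstar) ≤ 2 * (1 + D) ^ 2 := by
  obtain ⟨hD0, hD⟩ := hDdef
  have hCpos : 0 < C := by rw [hCdef]; linarith
  have hgradd : Differentiable ℝ grad := by
    have h1 : Differentiable ℝ (fderiv ℝ f) :=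
      (hf.fderiv_right (m := 1) (by norm_num)).differentiable (by norm_num)
    rw [differentiable_pi]
    intro i
    have h2 : (fun y => grad y i) = fun y => fderiv ℝ f y (Pi.single i 1) := by
      funext y
      rw [hgrad]
      simp
    rw [h2]
    exact h1.clm_apply (differentiable_const _)
  have hfd : Differentiable ℝ f := hf.differentiable (by norm_num)
  have hg0 : ∀ v, grad xstar ⬝ᵥ v = 0 := by
    intro v
    have h1 : IsLocalMin f xstar := Filter.Eventually.of_forall hmin
    rw [← hgrad, h1.fderiv_eq_zero]
    rfl
  set h : Fin d → ℝ := x - xstar with hh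
  set p : ℝ → (Fin d → ℝ) := fun t => xstar + t • h with hp
  have hp0 : p 0 = xstar := by simp [hp]
  have hp1 : p 1 = x := by simp [hp, hh]
  have hpd' : ∀ t, HasDerivAt p h t := by
    intro t
    exact (((hasDerivAt_id t).smul_const h).const_add xstar).congr_deriv (one_smul ℝ h)
  have hF : ∀ t, HasDerivAt (fun t => f (p t)) (grad (p t) ⬝ᵥ h) t := by
    intro t
    rw [← hgrad]
    exact (hfd (p t)).hasFDerivAt.comp_hasDerivAt t (hpd' t)
  have hgp : ∀ t, HasDerivAt (fun t => grad (p t)) (hess (p t) *ᵥ h) t := by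
    intro t
    rw [← hhess]
    exact (hgradd (p t)).hasFDerivAt.comp_hasDerivAt t (hpd' t)
  have hU : ∀ u t, HasDerivAt (fun t => grad (p t) ⬝ᵥ u) (u ⬝ᵥ (hess (p t) *ᵥ h)) t := by
    intro u t
    rw [dotProduct_comm]
    simp only [dotProduct]
    exact HasDerivAt.fun_sum fun i _ => ((hasDerivAt_pi.1 (hgp t)) i).mul_const (u i)
  have hG0 : grad (p 0) ⬝ᵥ h = 0 := by rw [hp0]; exact hg0 h
  obtain ⟨s, hs⟩ := exists_second_deriv_eq hF (hU h) hG0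
  rw [hp0, hp1, ← hCdef] at hs
  set b := M * Real.sqrt (2 * C) with hbdef
  have hb : 0 ≤ b := by positivity
  have hup : ∀ v t, 0 ≤ t →
      v ⬝ᵥ (hess (p t) *ᵥ v) ≤ (1 + b * t) * (v ⬝ᵥ (hess xstar *ᵥ v)) := by
    intro v t ht
    have h1 := (hssc (p t) xstar (p s)).quad_le v
    have h2 : p t - xstar = t • h := by simp [hp]
    rw [h2, mulVec_smul, dotProduct_smul, smul_dotProduct, hs, smul_eq_mul, smul_eq_mul,
      ← mul_assoc, Real.sqrt_mul (by positivity), Real.sqrt_mul_self ht] at h1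
    convert h1 using 2
    rw [hbdef]; ring
  have hlo : ∀ v t, 0 ≤ t →
      v ⬝ᵥ (hess xstar *ᵥ v) ≤ (1 + b * t) * (v ⬝ᵥ (hess (p t) *ᵥ v)) := by
    intro v t ht
    have h1 := (hssc xstar (p t) (p s)).quad_le v
    have h2 : xstar - p t = (-t) • h := by simp [hp]
    rw [h2, mulVec_smul, dotProduct_smul, smul_dotProduct, hs, smul_eq_mul, smul_eq_mul,
      ← mul_assoc, neg_mul_neg, Real.sqrt_mul (by positivity), Real.sqrt_mul_self ht] at h1
    convert h1 using 2
    rw [hbdef]; ring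
  set u := (hess xstar)⁻¹ *ᵥ grad x with hu
  have hHu : hess xstar *ᵥ u = grad x := by
    rw [hu, mulVec_mulVec, Matrix.mul_nonsing_inv _ (hpd xstar).det_pos.ne'.isUnit, one_mulVec]
  have hquu : u ⬝ᵥ (hess xstar *ᵥ u) = grad x ⬝ᵥ u := by rw [hHu, dotProduct_comm]
  obtain ⟨hl, hr⟩ := scalar_bounds (q := grad x ⬝ᵥ u) hb hF (hU h) (hU u) hG0
    (by rw [hp0]; exact hg0 u) (by rw [hp1])
    (by simpa using (hpd (p 0)).posSemidef.dotProduct_mulVec_nonneg h)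
    (fun t h0 _ => by rw [hp0]; exact hup h t h0)
    (fun t h0 _ => by rw [hp0]; exact hlo h t h0)
    (fun c t h0 _ => by
      have h1 := quad_expand (hpd (p t)) u h c
      have h2 := hup h t h0
      have h3 := mul_le_mul_of_nonneg_left (hup u t h0) (sq_nonneg c)
      rw [hquu] at h3
      rw [hp0]
      linarith)
    (fun c => by
      have h1 := quad_expand (hpd xstar) h u c
      rw [hquu, hHu, dotProduct_comm h (grad x)] at h1
      rw [hp0, hp1]
      exact h1)
  rw [hp0, hp1, ← hCdef] at hl hr
  have hbsq : b ^ 2 = 8 * omegaFn (D / 2) := by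
    rw [hD, hbdef, mul_pow, Real.sq_sqrt (by positivity)]
    ring
  have hbD : b ≤ D := by
    refine le_of_sq_le_sq ?_ hD0
    have := omegaFn_le_sq (by positivity : 0 ≤ D / 2)
    linarith
  have hb2 : b ^ 2 ≤ 4 * D := by
    have := omegaFn_le_self (by positivity : 0 ≤ D / 2)
    linarith
  have hR := factor_le hb hbD hb2
  set R := (1 + b / 2) ^ 2 * (1 + b / 3) with hRdef
  have hRpos : 0 < R := by positivity
  have hq0 : 0 < grad x ⬝ᵥ u := by
    by_contra! hneg
    have := mul_nonpos_of_nonneg_of_nonpos hRpos.le hneg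
    linarith
  rw [← hCdef]
  constructor
  · rw [div_le_div_iff₀ (by positivity) hCpos]
    have := mul_le_mul_of_nonneg_right hR hq0.le
    linarith
  · rw [div_le_iff₀ hCpos]
    have := mul_le_mul_of_nonneg_right hR hCpos.le
    linarith
end
end

section
/- Let f : ℝ^d → ℝ be three times continuously differentiable and strictly convex (∇²f(x) positive definite for all x), and suppose f is M-strongly self-concordant for some M > 0, i.e. ∇²f(x) − ∇²f(y) ⪯ M‖x−y‖_z ∇²f(y) for all x, y, z ∈ ℝ^d, where ‖u‖_z := √(uᵀ∇²f(z)u). Then for all x, u ∈ ℝ^d the third directional derivative satisfies |D³f(x)[u,u,u]| ≤ M·(uᵀ∇²f(x)u)^{3/2}; that is, f is self-concordant with parameter M/2. -/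
/-!
Restrict `f` to the line `t ↦ x + t • u`. The second derivative of this restriction is
`h t = uᵀ ∇²f(x + t u) u`, so the third directional derivative at `x` is `h' 0`. Strong
self-concordance, applied to the pair `(x + t u, x)` with the local norm at `x` and tested on `u`,
gives `h t ≤ h 0 + |t| * C` with `C = M * (h 0)^{3/2}`. Taking difference quotients from the right
gives `h' 0 ≤ C`, and from the left `h' 0 ≥ -C`. A one-sided growth bound is thus enough, because it
holds for both signs of `t`.
-/

open Matrix Real Finset

noncomputable section

theorem abs_deriv_le_of_le_add {h : ℝ → ℝ} {h' C : ℝ} (hd : HasDerivAt h h' 0)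
    (hb : ∀ t, h t ≤ h 0 + |t| * C) : |h'| ≤ C := by
  rw [abs_le]
  constructor
  · refine ge_of_tendsto hd.tendsto_slope_zero_left ?_
    filter_upwards [self_mem_nhdsWithin] with t ht
    have ht : t < 0 := ht
    have := hb t
    rw [abs_of_neg ht] at this
    rw [zero_add, smul_eq_mul, inv_mul_eq_div, le_div_iff_of_neg ht]
    linarith
  · refine le_of_tendsto hd.tendsto_slope_zero_right ?_
    filter_upwards [self_mem_nhdsWithin] with t ht
    have ht : 0 < t := ht
    have := hb t
    rw [abs_of_pos ht] at this
    rw [zero_add, smul_eq_mul, inv_mul_eq_div, div_le_iff₀ ht]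
    linarith

theorem contDiff_grad {d : ℕ} {f : (Fin d → ℝ) → ℝ} {grad : (Fin d → ℝ) → (Fin d → ℝ)}
    (hf : ContDiff ℝ 3 f) (hgrad : ∀ x v, fderiv ℝ f x v = grad x ⬝ᵥ v) :
    ContDiff ℝ 2 grad := by
  rw [contDiff_pi]
  intro i
  have h : (fun x => grad x i) = fun x => fderiv ℝ f x (Pi.single i 1) := by
    funext x
    rw [hgrad, dotProduct_single_one]
  rw [h]
  exact (hf.fderiv_right (m := 2) (by norm_num)).clm_apply contDiff_const

theorem hasDerivAt_line {d : ℕ} (x u : Fin d → ℝ) (t : ℝ) :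
    HasDerivAt (fun t : ℝ => x + t • u) u t := by
  simpa using ((hasDerivAt_id t).smul_const u).const_add x

theorem iteratedDeriv_two_line {d : ℕ} {f : (Fin d → ℝ) → ℝ}
    {grad : (Fin d → ℝ) → (Fin d → ℝ)} {hess : (Fin d → ℝ) → Matrix (Fin d) (Fin d) ℝ}
    (hf : ContDiff ℝ 3 f) (hgrad : ∀ x v, fderiv ℝ f x v = grad x ⬝ᵥ v)
    (hhess : ∀ x v, fderiv ℝ grad x v = hess x *ᵥ v) (x u : Fin d → ℝ) :
    iteratedDeriv 2 (fun t : ℝ => f (x + t • u)) =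
      fun t => u ⬝ᵥ (hess (x + t • u) *ᵥ u) := by
  have h1 : deriv (fun t : ℝ => f (x + t • u)) = fun t => u ⬝ᵥ grad (x + t • u) := by
    funext t
    have h := ((hf.differentiable (by norm_num)) (x + t • u)).hasFDerivAt.comp_hasDerivAt t
      (hasDerivAt_line x u t)
    rw [dotProduct_comm, ← hgrad]
    exact h.deriv
  have h2 : deriv (fun t : ℝ => u ⬝ᵥ grad (x + t • u)) =
      fun t => u ⬝ᵥ (hess (x + t • u) *ᵥ u) := by
    funext t
    have h := (((contDiff_grad hf hgrad).differentiable (by norm_num))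
      (x + t • u)).hasFDerivAt.comp_hasDerivAt t (hasDerivAt_line x u t)
    rw [hhess, hasDerivAt_pi] at h
    exact (HasDerivAt.fun_sum fun i _ => (h i).const_mul (u i)).deriv
  rw [iteratedDeriv_succ, iteratedDeriv_one, h1, h2]

/-- Strong self-concordance along a line, with the local norm taken at the base point. -/
theorem StronglySelfConcordant.line_le {d : ℕ}
    {hess : (Fin d → ℝ) → Matrix (Fin d) (Fin d) ℝ} {M : ℝ}
    (hssc : StronglySelfConcordant hess M) {x u : Fin d → ℝ}
    (hnn : 0 ≤ u ⬝ᵥ (hess x *ᵥ u)) (t : ℝ) :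
    u ⬝ᵥ (hess (x + t • u) *ᵥ u) ≤
      u ⬝ᵥ (hess x *ᵥ u) + |t| * (M * Real.sqrt (u ⬝ᵥ (hess x *ᵥ u)) ^ 3) := by
  have h := (hssc (x + t • u) x x).dotProduct_mulVec_nonneg u
  have hs : Real.sqrt ((t • u) ⬝ᵥ (hess x *ᵥ (t • u))) =
      |t| * Real.sqrt (u ⬝ᵥ (hess x *ᵥ u)) := by
    rw [mulVec_smul, smul_dotProduct, dotProduct_smul, smul_eq_mul, smul_eq_mul, ← mul_assoc,
      Real.sqrt_mul (mul_self_nonneg t), Real.sqrt_mul_self_eq_abs]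
  rw [add_sub_cancel_left, hs, star_trivial, sub_mulVec, sub_mulVec, smul_mulVec, dotProduct_sub,
    dotProduct_sub, dotProduct_smul, smul_eq_mul] at h
  have hsq := Real.sq_sqrt hnn
  have hcube : |t| * (M * Real.sqrt (u ⬝ᵥ (hess x *ᵥ u)) ^ 3) =
      M * (|t| * Real.sqrt (u ⬝ᵥ (hess x *ᵥ u))) * (u ⬝ᵥ (hess x *ᵥ u)) := by
    rw [pow_succ, hsq]
    ring
  linarith

/-- A strongly self-concordant function is self-concordant with parameter `M/2`. -/
theorem self_concordant_of_strongly_self_concordant {d : ℕ}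
    (f : (Fin d → ℝ) → ℝ)
    (grad : (Fin d → ℝ) → (Fin d → ℝ))
    (hess : (Fin d → ℝ) → Matrix (Fin d) (Fin d) ℝ)
    (hf : ContDiff ℝ 3 f)
    (hgrad : ∀ x v, fderiv ℝ f x v = grad x ⬝ᵥ v)
    (hhess : ∀ x v, fderiv ℝ grad x v = hess x *ᵥ v)
    (hpd : ∀ x, (hess x).PosDef)
    (M : ℝ) (hM : 0 < M)
    (hssc : StronglySelfConcordant hess M)
    (x u : Fin d → ℝ) :
    |iteratedDeriv 3 (fun t : ℝ => f (x + t • u)) 0| ≤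
      M * Real.sqrt (u ⬝ᵥ (hess x *ᵥ u)) ^ 3 := by
  have hC : ContDiff ℝ 3 (fun t : ℝ => f (x + t • u)) := by fun_prop
  have hd := (hC.differentiable_iteratedDeriv 2 (by norm_num) 0).hasDerivAt
  rw [← iteratedDeriv_succ, iteratedDeriv_two_line hf hgrad hhess] at hd
  refine abs_deriv_le_of_le_add hd fun t => ?_
  have hnn : 0 ≤ u ⬝ᵥ (hess x *ᵥ u) := by
    simpa using (hpd x).posSemidef.dotProduct_mulVec_nonneg u
  simpa using hssc.line_le hnn t
end
end
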